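/- arXiv:1811.02550 — 2 statements merged into one kernel-verified Lean document; each statement's English description precedes it below -/
import Mathlib

section
/- For coprime positive integers a and b, the average number of boxes over all simultaneous (a,b)-core partitions equals (a-1)(b-1)(a+b+1)/24. -/
/-- The hook length of the cell `(i, j)` of a Young diagram. -/
def YoungDiagram.hookLength (d : YoungDiagram) (i j : ℕ) : ℕ :=
  (d.rowLen i - j) + (d.colLen j - i) - 1

/-- A Young diagram (partition) is an `a`-core if none of its hook lengths equals `a`. -/
def YoungDiagram.IsCore (d : YoungDiagram) (a : ℕ) : Prop :=
  ∀ c ∈ d.cells, d.hookLength c.1 c.2 ≠ a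

namespace AC
open Finset

lemma move {ι : Type*} [Fintype ι] [DecidableEq ι] (b : ℕ) (i j : ι) (hij : i ≠ j) (u : ℚ → ℚ) :
    ∑ z ∈ piAntidiag (univ : Finset ι) b, (z j : ℚ) * (z i + 1) * u (z i)
      = ∑ z ∈ piAntidiag (univ : Finset ι) b, ((z j : ℚ) + 1) * (z i) * u (z i - 1) := by
  have hsum : ∀ z : ι → ℕ, ∑ k, z k = z i + (z j + ∑ k ∈ (univ.erase i).erase j, z k) := by
    intro z
    rw [add_sum_erase _ _ (by simp [hij.symm]), add_sum_erase _ _ (by simp)]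
  have hcong : ∀ (z : ι → ℕ) (x y : ℕ),
      ∑ k ∈ (univ.erase i).erase j, (Function.update (Function.update z i x) j y) k
       = ∑ k ∈ (univ.erase i).erase j, z k := by
    intro z x y
    refine sum_congr rfl fun k hk => ?_
    simp only [mem_erase, mem_univ, and_true] at hk
    simp [Function.update_of_ne hk.1, Function.update_of_ne hk.2]
  refine sum_bij_ne_zero
    (fun z _ _ => Function.update (Function.update z i (z i + 1)) j (z j - 1)) ?_ ?_ ?_ ?_
  · intro z hz hne
    have hj : z j ≠ 0 := by rintro h; simp [h] at hne
    simp only [mem_piAntidiag, mem_univ, implies_true, and_true] at hz ⊢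
    rw [hsum] at hz ⊢
    rw [hcong]
    simp [Function.update_of_ne hij]
    omega
  · intro z hz hne w hw hne' h
    have hj : z j ≠ 0 := by rintro h; simp [h] at hne
    have hj' : w j ≠ 0 := by rintro h; simp [h] at hne'
    funext k
    have hk := congrFun h k
    by_cases h1 : k = j
    · subst h1; simp at hk; omega
    · by_cases h2 : k = i
      · subst h2; simp [Function.update_of_ne h1] at hk; omega
      · simpa [Function.update_of_ne h1, Function.update_of_ne h2] using hk
  · intro w hw hne
    have hi : w i ≠ 0 := by rintro h; simp [h] at hne
    have hwi : ((w i - 1 : ℕ) : ℚ) = w i - 1 := by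
      rw [Nat.cast_sub (by omega)]; simp
    refine ⟨Function.update (Function.update w i (w i - 1)) j (w j + 1), ?_, ?_, ?_⟩
    · simp only [mem_piAntidiag, mem_univ, implies_true, and_true] at hw ⊢
      rw [hsum] at hw ⊢
      rw [hcong]
      simp [Function.update_of_ne hij]
      omega
    · simp only [Function.update_self, Function.update_of_ne hij, hwi]
      simpa using hne
    · funext k
      by_cases h1 : k = j
      · subst h1; simp
      · by_cases h2 : k = i
        · subst h2; simp [Function.update_of_ne h1]; omega
        · simp [Function.update_of_ne h1, Function.update_of_ne h2]
  · intro z hz hne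
    have hj : z j ≠ 0 := by rintro h; simp [h] at hne
    have hzj : ((z j - 1 : ℕ) : ℚ) = z j - 1 := by
      rw [Nat.cast_sub (by omega)]; simp
    simp [Function.update_of_ne hij, hzj]

lemma moment1 {ι : Type*} [Fintype ι] [DecidableEq ι] (b : ℕ) (i : ι) :
    (Fintype.card ι : ℚ) * ∑ z ∈ piAntidiag (univ : Finset ι) b, (z i : ℚ)
      = b * (piAntidiag (univ : Finset ι) b).card := by
  have h : ∀ j : ι, ∑ z ∈ piAntidiag (univ : Finset ι) b, (z j : ℚ)
      = ∑ z ∈ piAntidiag (univ : Finset ι) b, (z i : ℚ) := by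
    intro j
    by_cases hij : i = j
    · rw [hij]
    have := move b i j hij (fun _ => 1)
    rw [← sub_eq_zero, ← sum_sub_distrib] at this ⊢
    rw [← this]
    exact sum_congr rfl fun z _ => by ring
  have h2 : ∑ j : ι, ∑ z ∈ piAntidiag (univ : Finset ι) b, (z j : ℚ)
      = b * (piAntidiag (univ : Finset ι) b).card := by
    rw [sum_comm, sum_congr rfl (g := fun _ => (b : ℚ))]
    · simp [mul_comm]
    · intro z hz
      simp only [mem_piAntidiag] at hz
      rw [← hz.1]; push_cast; rfl
  rw [← h2, sum_congr rfl (fun j _ => h j)]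
  simp

lemma moment11 {ι : Type*} [Fintype ι] [DecidableEq ι] (b : ℕ) (i j : ι) :
    (Fintype.card ι : ℚ) * (Fintype.card ι + 1) *
      ∑ z ∈ piAntidiag (univ : Finset ι) b, (z i : ℚ) * z j
      = b * (piAntidiag (univ : Finset ι) b).card *
        ((b - 1) + if i = j then (b + Fintype.card ι : ℚ) else 0) := by
  set P := piAntidiag (univ : Finset ι) b with hP
  set m1 := ∑ z ∈ P, (z i : ℚ) with hm1
  set m2 := ∑ z ∈ P, (z i : ℚ) * z i with hm2
  have h : ∀ j : ι, i ≠ j → 2 * ∑ z ∈ P, (z i : ℚ) * z j = m2 - m1 := by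
    intro j hij
    have := move b i j hij (fun x => x)
    rw [hm1, hm2, ← sum_sub_distrib, mul_sum]
    rw [← sub_eq_zero, ← sum_sub_distrib] at this ⊢
    rw [← this]
    exact sum_congr rfl fun z _ => by ring
  have h1 := moment1 b i
  rw [← hP, ← hm1] at h1
  have h2 : ∑ j : ι, ∑ z ∈ P, (z i : ℚ) * z j = b * m1 := by
    rw [sum_comm, hm1, mul_sum]
    refine sum_congr rfl fun z hz => ?_
    rw [hP, mem_piAntidiag] at hz
    rw [← mul_sum, ← hz.1]; push_cast; ring
  have h3 : 2 * (b * m1) = 2 * m2 + (Fintype.card ι - 1) * (m2 - m1) := by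
    rw [← h2, ← add_sum_erase _ _ (mem_univ i), mul_add, mul_sum (univ.erase i),
      sum_congr rfl (fun j hj => h j (ne_of_mem_erase hj).symm)]
    simp only [sum_const, card_erase_of_mem (mem_univ i), nsmul_eq_mul, card_univ]
    rw [Nat.cast_sub (Fintype.card_pos_iff.2 ⟨i⟩)]
    simp [hm2]
  have h4 : (Fintype.card ι + 1 : ℚ) * m2 = (2 * b + Fintype.card ι - 1) * m1 := by linarith
  by_cases hij : i = j
  · subst hij
    rw [if_pos rfl, ← h1, ← hm2]
    linear_combination (Fintype.card ι : ℚ) * h4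
  · rw [if_neg hij, ← h1]
    linear_combination (Fintype.card ι : ℚ) * (Fintype.card ι + 1) / 2 * h j hij
      + (Fintype.card ι : ℚ) / 2 * h4

lemma variance {ι : Type*} [Fintype ι] [DecidableEq ι] [Nonempty ι] (b : ℕ) (A : Finset ι) :
    ((Fintype.card ι : ℚ) + 1) * ∑ z ∈ piAntidiag (univ : Finset ι) b,
      (∑ k ∈ A, ((b : ℚ) - Fintype.card ι * z k)) ^ 2
      = A.card * (Fintype.card ι - A.card) * b * (Fintype.card ι + b) *
        (piAntidiag (univ : Finset ι) b).card := by
  set P := piAntidiag (univ : Finset ι) b with hP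
  set a : ℚ := (Fintype.card ι : ℚ) with ha
  have ha0 : a ≠ 0 := by rw [ha]; exact_mod_cast Fintype.card_ne_zero
  have key : ∀ i j : ι, (a + 1) * ∑ z ∈ P, ((b : ℚ) - a * z i) * (b - a * z j)
      = b * P.card * (-(a + b) + if i = j then a * (a + b) else 0) := by
    intro i j
    have e1 := moment1 b i
    have e2 := moment1 b j
    have e3 := moment11 b i j
    rw [← hP, ← ha] at e1 e2 e3
    have : ∑ z ∈ P, ((b : ℚ) - a * z i) * (b - a * z j)
      = b ^ 2 * P.card - b * (a * ∑ z ∈ P, (z i : ℚ)) - b * (a * ∑ z ∈ P, (z j : ℚ))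
        + a * (a * ∑ z ∈ P, (z i : ℚ) * z j) := by
      simp only [mul_sum]
      have : (b : ℚ) ^ 2 * P.card = ∑ z ∈ P, (b : ℚ) ^ 2 := by simp [mul_comm]
      rw [this, ← sum_sub_distrib, ← sum_sub_distrib, ← sum_add_distrib]
      exact sum_congr rfl fun z _ => by ring
    rw [this, e1, e2]
    split_ifs at e3 ⊢ with hij <;> linear_combination a * e3
  have : ∑ z ∈ P, (∑ k ∈ A, ((b : ℚ) - a * z k)) ^ 2
      = ∑ i ∈ A, ∑ j ∈ A, ∑ z ∈ P, ((b : ℚ) - a * z i) * (b - a * z j) := by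
    simp_rw [sq, sum_mul_sum]
    rw [sum_comm]
    exact sum_congr rfl fun i _ => by rw [sum_comm]
  rw [this]
  rw [mul_sum, sum_congr rfl (fun i _ => by
    rw [mul_sum, sum_congr rfl (fun j _ => key i j), ← mul_sum]), ← mul_sum]
  simp only [sum_add_distrib, sum_const, sum_ite_eq, nsmul_eq_mul]
  rw [sum_ite_mem, inter_self]
  simp only [sum_const, nsmul_eq_mul]
  ring
end AC

namespace AC
open Finset

def beta (d : YoungDiagram) (i : ℕ) : ℤ := (d.rowLen i : ℤ) - i - 1
def gam (d : YoungDiagram) (j : ℕ) : ℤ := (j : ℤ) - d.colLen j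

lemma beta_strictAnti (d : YoungDiagram) : StrictAnti (beta d) := by
  refine strictAnti_nat_of_succ_lt fun n => ?_
  have := d.rowLen_anti n (n + 1) (by omega)
  simp only [beta]; push_cast; omega

lemma gam_lt_beta {d : YoungDiagram} {i j : ℕ} (h : (i, j) ∈ d) : gam d j < beta d i := by
  have h1 := YoungDiagram.mem_iff_lt_rowLen.1 h
  have h2 := YoungDiagram.mem_iff_lt_colLen.1 h
  simp only [beta, gam]; omega

lemma beta_lt_gam {d : YoungDiagram} {i j : ℕ} (h : (i, j) ∉ d) : beta d i < gam d j := by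
  have h1 := mt YoungDiagram.mem_iff_lt_rowLen.2 h
  have h2 := mt YoungDiagram.mem_iff_lt_colLen.2 h
  simp only [beta, gam]; omega

lemma beta_ne_gam (d : YoungDiagram) (i j : ℕ) : beta d i ≠ gam d j := by
  by_cases h : (i, j) ∈ d
  · exact (gam_lt_beta h).ne'
  · exact (beta_lt_gam h).ne

lemma beta_or_gam (d : YoungDiagram) (n : ℤ) : (∃ i, beta d i = n) ∨ ∃ j, gam d j = n := by
  classical
  have hex : ∃ i, beta d i ≤ n := by
    refine ⟨(d.rowLen 0 - n).toNat, ?_⟩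
    have := d.rowLen_anti 0 (d.rowLen 0 - n).toNat (by omega)
    simp only [beta]; omega
  obtain ⟨i, hi, hmin⟩ : ∃ i, beta d i ≤ n ∧ ∀ i' < i, ¬ beta d i' ≤ n :=
    ⟨Nat.find hex, Nat.find_spec hex, fun i' h => Nat.find_min hex h⟩
  rcases hi.eq_or_lt with h | h
  · exact Or.inl ⟨i, h⟩
  right
  simp only [beta] at h
  obtain ⟨j, hj⟩ : ∃ j : ℕ, (j : ℤ) = n + i := ⟨(n + i).toNat, by omega⟩
  refine ⟨j, ?_⟩
  have h1 : (i, j) ∉ d := by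
    rw [YoungDiagram.mem_iff_lt_rowLen]; omega
  rw [YoungDiagram.mem_iff_lt_colLen] at h1
  have h2 : i ≤ d.colLen j := by
    rcases Nat.eq_zero_or_pos i with h0 | h0
    · omega
    · have := hmin (i - 1) (by omega)
      simp only [beta] at this
      have h3 : (i - 1, j) ∈ d := by
        rw [YoungDiagram.mem_iff_lt_rowLen]; omega
      rw [YoungDiagram.mem_iff_lt_colLen] at h3
      omega
  simp only [gam]; omega

lemma core_iff (d : YoungDiagram) (a : ℕ) (ha : 0 < a) :
    d.IsCore a ↔ ∀ n ∈ Set.range (beta d), n - a ∈ Set.range (beta d) := by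
  constructor
  · rintro h _ ⟨i, rfl⟩
    rcases beta_or_gam d (beta d i - a) with h1 | ⟨j, hj⟩
    · exact h1
    · exfalso
      have hm : (i, j) ∈ d := by
        by_contra hm
        have := beta_lt_gam hm
        omega
      refine h (i, j) ((YoungDiagram.mem_cells _).2 hm) ?_
      have h1 := YoungDiagram.mem_iff_lt_rowLen.1 hm
      have h2 := YoungDiagram.mem_iff_lt_colLen.1 hm
      simp only [YoungDiagram.hookLength]
      simp only [beta, gam] at hj
      omega
  · rintro h ⟨i, j⟩ hc heq
    have hm : (i, j) ∈ d := (YoungDiagram.mem_cells _).1 hc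
    obtain ⟨i', hi'⟩ := h _ ⟨i, rfl⟩
    refine beta_ne_gam d i' j ?_
    rw [hi']
    have h1 := YoungDiagram.mem_iff_lt_rowLen.1 hm
    have h2 := YoungDiagram.mem_iff_lt_colLen.1 hm
    simp only [YoungDiagram.hookLength] at heq
    simp only [beta, gam]
    omega

lemma rowLen_zero (d : YoungDiagram) (i : ℕ) (hi : d.colLen 0 ≤ i) : d.rowLen i = 0 := by
  by_contra h
  have : (i, 0) ∈ d := YoungDiagram.mem_iff_lt_rowLen.2 (by omega)
  rw [YoungDiagram.mem_iff_lt_colLen] at this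
  omega

lemma card_eq (d : YoungDiagram) (N : ℕ) (h : d.colLen 0 ≤ N) :
    d.cells.card = ∑ i ∈ range N, d.rowLen i := by
  rw [card_eq_sum_card_fiberwise (f := Prod.fst) (t := range N)]
  · refine sum_congr rfl fun i _ => ?_
    rw [YoungDiagram.rowLen_eq_card]; rfl
  · rintro ⟨i, j⟩ hc
    have hm : (i, j) ∈ d := by simpa using hc
    have h1 := YoungDiagram.mem_iff_lt_rowLen.1 hm
    simp only [coe_range, Set.mem_Iio]
    by_contra h2
    have := rowLen_zero d i (by omega)
    omega

lemma beta_inj {d e : YoungDiagram} (h : Set.range (beta d) = Set.range (beta e)) : d = e := by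
  have h1 : StrictMono (fun i => - beta d i) := fun i j hij => neg_lt_neg (beta_strictAnti d hij)
  have h2 : StrictMono (fun i => - beta e i) := fun i j hij => neg_lt_neg (beta_strictAnti e hij)
  have h3 : Set.range (fun i => - beta d i) = Set.range (fun i => - beta e i) := by
    ext n
    have := Set.ext_iff.1 h (-n)
    simp only [Set.mem_range] at this ⊢
    constructor
    · rintro ⟨i, hi⟩
      obtain ⟨j, hj⟩ := this.1 ⟨i, by omega⟩
      exact ⟨j, by omega⟩
    · rintro ⟨i, hi⟩
      obtain ⟨j, hj⟩ := this.2 ⟨i, by omega⟩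
      exact ⟨j, by omega⟩
  have h4 := (StrictMono.range_inj h1 h2).1 h3
  refine SetLike.ext ?_
  rintro ⟨i, j⟩
  have := congrFun h4 i
  simp only [beta] at this
  rw [YoungDiagram.mem_iff_lt_rowLen, YoungDiagram.mem_iff_lt_rowLen]
  omega

lemma exists_of_rows (f : ℕ → ℕ) (hf : Antitone f) (N : ℕ) (hN : ∀ i, N ≤ i → f i = 0) :
    ∃ d : YoungDiagram, ∀ i, d.rowLen i = f i := by
  let d : YoungDiagram :=
    { cells := (range N ×ˢ range (f 0)).filter (fun c => c.2 < f c.1)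
      isLowerSet := by
        rintro ⟨i, j⟩ ⟨i', j'⟩ hle hm
        simp only [Prod.mk_le_mk] at hle
        simp only [coe_filter, mem_product, mem_range, Set.mem_ofPred_eq] at hm ⊢
        have := hf hle.1
        omega }
  have hmem : ∀ i j, (i, j) ∈ d ↔ j < f i := by
    intro i j
    rw [← YoungDiagram.mem_cells]
    simp only [d, mem_filter, mem_product, mem_range, and_iff_right_iff_imp]
    intro h
    have h1 := hf (Nat.zero_le i)
    refine ⟨?_, by omega⟩
    by_contra h2
    have := hN i (by omega)
    omega
  refine ⟨d, fun i => ?_⟩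
  have h1 := fun j => hmem i j
  simp only [YoungDiagram.mem_iff_lt_rowLen] at h1
  have h2 := h1 (d.rowLen i)
  have h3 := h1 (f i)
  omega

lemma exists_diagram (W : Finset ℤ) (N : ℕ) (hc : W.card = N) (hW : ∀ w ∈ W, -(N : ℤ) ≤ w) :
    ∃ d : YoungDiagram, ∀ n : ℤ, n ∈ Set.range (beta d) ↔ n < -N ∨ n ∈ W := by
  let e := W.orderEmbOfFin hc
  let s : ℕ → ℤ := fun i => if h : i < N then e ⟨N - 1 - i, by omega⟩ else -i - 1
  have hs1 : ∀ i, ∀ h : i < N, s i = e ⟨N - 1 - i, by omega⟩ := fun i h => by simp [s, h]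
  have hs2 : ∀ i, N ≤ i → s i = -i - 1 := fun i h => by simp [s, not_lt.2 h]
  have hanti : ∀ i, s (i + 1) < s i := by
    intro i
    rcases lt_trichotomy (i + 1) N with h | h | h
    · rw [hs1 i (by omega), hs1 (i + 1) h]
      apply e.strictMono
      simp only [Fin.mk_lt_mk]; omega
    · rw [hs1 i (by omega), hs2 (i + 1) (by omega)]
      have := hW _ (W.orderEmbOfFin_mem hc ⟨N - 1 - i, by omega⟩)
      change _ < W.orderEmbOfFin hc _
      push_cast; omega
    · rw [hs2 i (by omega), hs2 (i + 1) (by omega)]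
      push_cast; omega
  have hant : Antitone (fun i : ℕ => s i + i + 1) := by
    refine antitone_nat_of_succ_le fun i => ?_
    have := hanti i
    push_cast; omega
  have hnn : ∀ i : ℕ, 0 ≤ s i + i + 1 := by
    intro i
    have h1 := hant (le_max_left i N)
    have h2 := hs2 (max i N) (le_max_right i N)
    simp only at h1
    omega
  obtain ⟨d, hd⟩ := exists_of_rows (fun i => (s i + i + 1).toNat)
    (fun i j hij => Int.toNat_le_toNat (hant hij)) N (fun i hi => by
      have := hs2 i hi
      simp only [this]; omega)
  have hb : ∀ i, beta d i = s i := by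
    intro i
    have := hnn i
    simp only [beta, hd]; omega
  refine ⟨d, fun n => ?_⟩
  simp only [Set.mem_range, hb]
  constructor
  · rintro ⟨i, rfl⟩
    by_cases h : i < N
    · right; rw [hs1 i h]; exact W.orderEmbOfFin_mem hc _
    · left; rw [hs2 i (by omega)]; omega
  · rintro (h | h)
    · refine ⟨(-n - 1).toNat, ?_⟩
      rw [hs2 _ (by omega)]; omega
    · have : n ∈ Set.range (W.orderEmbOfFin hc) := by
        rw [Finset.range_orderEmbOfFin]; exact h
      obtain ⟨⟨k, hk⟩, hk2⟩ := this
      refine ⟨N - 1 - k, ?_⟩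
      rw [hs1 _ (by omega), ← hk2]
      change W.orderEmbOfFin hc _ = _
      congr 2; omega
end AC

namespace AC
open Finset

/-- Abacus data of simultaneous cores. -/
def HSet (a b : ℕ) [NeZero a] : Set (ZMod a → ℤ) :=
  {h | (∀ r, ((h r : ℤ) : ZMod a) = r) ∧ (∀ r, h (r + b) ≤ h r + b) ∧
    2 * ∑ r, h r = (a : ℤ) * (a - 1)}

def Rel {a : ℕ} (d : YoungDiagram) (h : ZMod a → ℤ) : Prop :=
  ∀ n : ℤ, n ∈ Set.range (beta d) ↔ n < h n

lemma rel_left {a : ℕ} {d e : YoungDiagram} {h : ZMod a → ℤ} (h1 : Rel d h) (h2 : Rel e h) :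
    d = e := by
  apply beta_inj
  ext n
  rw [h1 n, h2 n]

lemma rel_right {a : ℕ} {d : YoungDiagram} {h g : ZMod a → ℤ} (h1 : Rel d h) (h2 : Rel d g)
    (hh : ∀ r, ((h r : ℤ) : ZMod a) = r) (hg : ∀ r, ((g r : ℤ) : ZMod a) = r) : h = g := by
  funext r
  have e1 := (h1 (h r)).symm.trans (h2 (h r))
  have e2 := (h1 (g r)).symm.trans (h2 (g r))
  rw [hh] at e1
  rw [hg] at e2
  omega

lemma sum_val (a : ℕ) [NeZero a] (f : ℕ → ℤ) : ∑ r : ZMod a, f r.val = ∑ i ∈ range a, f i := by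
  refine sum_bij (fun r _ => r.val) ?_ ?_ ?_ ?_
  · intro r _; simpa using ZMod.val_lt r
  · intro r _ s _ h; exact ZMod.val_injective a h
  · intro i hi
    exact ⟨(i : ZMod a), mem_univ _, ZMod.val_cast_of_lt (by simpa using hi)⟩
  · intros; rfl

lemma two_sum_val (a : ℕ) [NeZero a] : 2 * ∑ r : ZMod a, (r.val : ℤ) = (a : ℤ) * (a - 1) := by
  rw [sum_val a (fun i => (i : ℤ))]
  induction a with
  | zero => simp
  | succ n ih => rw [sum_range_succ, mul_add, ih]; push_cast; ring

lemma exists_q {a : ℕ} [NeZero a] {h : ZMod a → ℤ} (hh : ∀ r, ((h r : ℤ) : ZMod a) = r) :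
    ∃ q : ZMod a → ℤ, ∀ r, h r = (r.val : ℤ) + a * q r := by
  have : ∀ r, ∃ q : ℤ, h r = (r.val : ℤ) + a * q := by
    intro r
    have : (a : ℤ) ∣ h r - r.val := by
      rw [← ZMod.intCast_zmod_eq_zero_iff_dvd]
      push_cast
      rw [hh, ZMod.natCast_zmod_val, sub_self]
    obtain ⟨q, hq⟩ := this
    exact ⟨q, by omega⟩
  choose q hq using this
  exact ⟨q, hq⟩

/-- window of beads -/
noncomputable def win {a : ℕ} [NeZero a] (q : ZMod a → ℤ) (K : ℕ) : Finset (Σ _ : ZMod a, ℤ) :=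
  univ.sigma (fun r => Ico (-(K : ℤ)) (q r))

def pos {a : ℕ} (x : Σ _ : ZMod a, ℤ) : ℤ := (x.1.val : ℤ) + a * x.2

lemma pos_cast {a : ℕ} [NeZero a] (x : Σ _ : ZMod a, ℤ) : ((pos x : ℤ) : ZMod a) = x.1 := by
  simp [pos]

lemma pos_inj {a : ℕ} [NeZero a] : Function.Injective (pos (a := a)) := by
  rintro ⟨r, m⟩ ⟨s, n⟩ h
  have h1 := congrArg (fun z : ℤ => (z : ZMod a)) h
  simp only [pos_cast] at h1
  subst h1
  have ha : (a : ℤ) ≠ 0 := by exact_mod_cast NeZero.ne a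
  simp only [pos, add_right_inj, mul_eq_mul_left_iff, ha, or_false] at h
  rw [h]

lemma mem_win {a : ℕ} [NeZero a] {h q : ZMod a → ℤ} (hq : ∀ r, h r = (r.val : ℤ) + a * q r)
    (K : ℕ) (n : ℤ) : n ∈ (win q K).image pos ↔ -((a * K : ℕ) : ℤ) ≤ n ∧ n < h n := by
  have ha : (0 : ℤ) < a := by exact_mod_cast Nat.pos_of_ne_zero (NeZero.ne a)
  constructor
  · intro hn
    obtain ⟨⟨r, m⟩, hm, rfl⟩ := mem_image.1 hn
    rw [pos_cast, hq]
    simp only [win, mem_sigma, mem_univ, true_and, mem_Ico] at hm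
    simp only [pos]
    push_cast
    constructor
    · nlinarith
    · nlinarith
  · rintro ⟨h1, h2⟩
    obtain ⟨m, hm⟩ : ∃ m : ℤ, n = ((n : ZMod a).val : ℤ) + a * m := by
      have : (a : ℤ) ∣ n - (n : ZMod a).val := by
        rw [← ZMod.intCast_zmod_eq_zero_iff_dvd]
        simp
      obtain ⟨m, hm⟩ := this
      exact ⟨m, by omega⟩
    refine mem_image.2 ⟨⟨n, m⟩, ?_, hm.symm⟩
    have hv : ((n : ZMod a).val : ℤ) < a := by exact_mod_cast ZMod.val_lt _
    simp only [win, mem_sigma, mem_univ, true_and, mem_Ico]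
    rw [hq] at h2
    push_cast at h1
    generalize ((n : ZMod a).val : ℤ) = v at *
    constructor
    · by_contra hlt
      have : m + 1 ≤ -K := by omega
      nlinarith
    · by_contra hlt
      push Not at hlt
      nlinarith

lemma sum_beta {a : ℕ} [NeZero a] {d : YoungDiagram} {h q : ZMod a → ℤ}
    (hq : ∀ r, h r = (r.val : ℤ) + a * q r) (hr : Rel d h)
    (K : ℕ) (hK : d.colLen 0 ≤ a * K) (f : ℤ → ℤ) :
    ∑ i ∈ range (a * K), f (beta d i)
      = ∑ r, ∑ m ∈ Ico (-(K : ℤ)) (q r), f ((r.val : ℤ) + a * m) := by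
  have e1 : (range (a * K)).image (beta d) = (win q K).image pos := by
    ext n
    rw [mem_win hq, ← hr n]
    have hlast : ∀ i, a * K ≤ i → beta d i = - i - 1 := by
      intro i hi
      simp [beta, rowLen_zero d i (hK.trans hi)]
    constructor
    · intro hn
      obtain ⟨i, hi, rfl⟩ := mem_image.1 hn
      refine ⟨?_, ⟨i, rfl⟩⟩
      rw [mem_range] at hi
      simp only [beta]; omega
    · rintro ⟨h1, ⟨i, rfl⟩⟩
      refine mem_image.2 ⟨i, ?_, rfl⟩
      rw [mem_range]
      by_contra h2
      have := hlast i (by omega)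
      omega
  have e2 := congrArg (fun s => ∑ n ∈ s, f n) e1
  rw [sum_image (fun x _ y _ hxy => (beta_strictAnti d).injective hxy),
    sum_image (fun x _ y _ hxy => pos_inj hxy)] at e2
  rw [e2, win, sum_sigma]
  rfl

lemma sum_Ico_closed (v a : ℤ) (K : ℕ) (q : ℤ) (hq : -(K : ℤ) ≤ q) :
    2 * ∑ m ∈ Ico (-(K : ℤ)) q, (v + a * m)
      = (2 * v * q + a * q * (q - 1)) - (- 2 * v * K + a * K * (K + 1)) := by
  induction q, hq using Int.leInduction with
  | base => simp; ring
  | succ n hn ih =>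
    rw [← Finset.insert_Ico_right_eq_Ico_add_one hn, sum_insert (by simp), mul_add, ih]
    ring

lemma exists_K {a : ℕ} [NeZero a] (d : YoungDiagram) (q : ZMod a → ℤ) :
    ∃ K : ℕ, d.colLen 0 ≤ a * K ∧ ∀ r, -(K : ℤ) ≤ q r := by
  refine ⟨d.colLen 0 + ∑ r, (q r).natAbs, ?_, ?_⟩
  · have : 1 ≤ a := Nat.pos_of_ne_zero (NeZero.ne a)
    nlinarith [Nat.zero_le (∑ r, (q r).natAbs)]
  · intro r
    have := single_le_sum (f := fun r => (q r).natAbs) (fun _ _ => Nat.zero_le _) (mem_univ r)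
    push_cast
    zify at this
    have h2 := neg_abs_le (q r)
    have h3 : (0 : ℤ) ≤ d.colLen 0 := by positivity
    linarith

lemma charge {a : ℕ} [NeZero a] {d : YoungDiagram} {h q : ZMod a → ℤ}
    (hq : ∀ r, h r = (r.val : ℤ) + a * q r) (hr : Rel d h) : ∑ r, q r = 0 := by
  obtain ⟨K, hK, hK2⟩ := exists_K d q
  have := sum_beta hq hr K hK (fun _ => 1)
  simp only [sum_const, card_range, nsmul_eq_mul, mul_one, Int.card_Ico] at this
  rw [sum_congr rfl (fun r _ => Int.toNat_of_nonneg (by have := hK2 r; omega))] at this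
  simp only [sub_neg_eq_add, sum_add_distrib, sum_const, card_univ, ZMod.card, nsmul_eq_mul] at this
  push_cast at this
  linarith

lemma size {a : ℕ} [NeZero a] {d : YoungDiagram} {h : ZMod a → ℤ}
    (hh : ∀ r, ((h r : ℤ) : ZMod a) = r) (hr : Rel d h) :
    2 * a * (d.cells.card : ℤ) = ∑ r, (h r) ^ 2 - ∑ r : ZMod a, (r.val : ℤ) ^ 2 := by
  obtain ⟨q, hq⟩ := exists_q hh
  have hch := charge hq hr
  obtain ⟨K, hK, hK2⟩ := exists_K d q
  have e := sum_beta hq hr K hK (fun x => x)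
  have e2 := congrArg (fun x => 2 * x) e
  rw [mul_sum (univ : Finset (ZMod a)),
    sum_congr rfl (fun r _ => sum_Ico_closed (r.val : ℤ) a K (q r) (hK2 r))] at e2
  have e3 : 2 * ∑ i ∈ range (a * K), beta d i
      = 2 * (d.cells.card : ℤ) - ((a * K : ℕ) : ℤ) * ((a * K : ℕ) + 1) := by
    rw [card_eq d _ hK]
    have : ∀ N : ℕ, 2 * ∑ i ∈ range N, beta d i
        = 2 * ((∑ i ∈ range N, d.rowLen i : ℕ) : ℤ) - (N : ℤ) * (N + 1) := by
      intro N
      induction N with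
      | zero => simp
      | succ n ih =>
        rw [sum_range_succ, sum_range_succ, mul_add, ih]
        simp only [beta]; push_cast; ring
    exact this _
  rw [e3] at e2
  have e4 := two_sum_val a
  have e5 : ∑ r : ZMod a, ((2 * (r.val : ℤ) * q r + a * q r * (q r - 1))
      - (- 2 * (r.val : ℤ) * K + a * K * (K + 1)))
      = ∑ r : ZMod a, (2 * (r.val : ℤ) * q r + a * (q r) ^ 2) - a * ∑ r, q r
        + K * (2 * ∑ r : ZMod a, (r.val : ℤ)) - a * (a * K * (K + 1)) := by
    have : (a : ℤ) * (a * K * (K + 1)) = ∑ r : ZMod a, (a : ℤ) * K * (K + 1) := by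
      simp [ZMod.card]
    rw [this]
    simp only [mul_sum]
    rw [← sum_sub_distrib, ← sum_add_distrib, ← sum_sub_distrib]
    exact sum_congr rfl fun r _ => by ring
  rw [e5, hch, e4] at e2
  have e6 : ∑ r, (h r) ^ 2 - ∑ r : ZMod a, (r.val : ℤ) ^ 2
      = a * ∑ r : ZMod a, (2 * (r.val : ℤ) * q r + a * (q r) ^ 2) := by
    rw [← sum_sub_distrib, mul_sum]
    exact sum_congr rfl fun r _ => by rw [hq]; ring
  rw [e6]
  push_cast at e2
  linear_combination (a : ℤ) * e2

lemma exists_h {a b : ℕ} [NeZero a] (hb : 0 < b) {d : YoungDiagram} (h1 : d.IsCore a)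
    (h2 : d.IsCore b) : ∃ h ∈ HSet a b, Rel d h := by
  have ha : 0 < a := Nat.pos_of_ne_zero (NeZero.ne a)
  rw [core_iff d a ha] at h1
  rw [core_iff d b hb] at h2
  have hlow : ∀ n : ℤ, n < - d.colLen 0 → n ∈ Set.range (beta d) := by
    intro n hn
    refine ⟨(-n - 1).toNat, ?_⟩
    simp only [beta, rowLen_zero d (-n - 1).toNat (by omega)]; omega
  have hup : ∀ n : ℤ, n ∈ Set.range (beta d) → n < d.rowLen 0 := by
    rintro _ ⟨i, rfl⟩
    have := d.rowLen_anti 0 i (by omega)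
    simp only [beta]; omega
  have hex : ∀ r : ZMod a, ∃ x : ℤ, ((x : ZMod a) = r ∧ x ∉ Set.range (beta d)) ∧
      ∀ y : ℤ, ((y : ZMod a) = r ∧ y ∉ Set.range (beta d)) → x ≤ y := by
    intro r
    refine Int.exists_least_of_bdd ⟨-(d.colLen 0 : ℤ), ?_⟩ ⟨(r.val : ℤ) + a * d.rowLen 0, ?_, ?_⟩
    · rintro z ⟨_, hz⟩
      by_contra hlt
      exact hz (hlow z (by omega))
    · simp
    · intro hm
      have := hup _ hm
      have h3 : (0 : ℤ) ≤ d.rowLen 0 := by positivity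
      have h4 : (1 : ℤ) ≤ a := by exact_mod_cast ha
      have h5 : (0 : ℤ) ≤ r.val := by positivity
      nlinarith
  choose h hh using hex
  have hcl : ∀ m : ℕ, ∀ n ∈ Set.range (beta d), n - a * m ∈ Set.range (beta d) := by
    intro m
    induction m with
    | zero => intro n hn; simpa using hn
    | succ k ih =>
      intro n hn
      have := h1 _ (ih n hn)
      convert this using 1
      push_cast; ring
  have hrel : Rel d h := by
    intro n
    constructor
    · intro hn
      by_contra hle
      have hd : (a : ℤ) ∣ n - h n := by
        rw [← ZMod.intCast_zmod_eq_zero_iff_dvd]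
        push_cast
        rw [(hh n).1.1, sub_self]
      obtain ⟨m, hm⟩ := hd
      have hm0 : 0 ≤ m := by
        by_contra hneg
        have : (0 : ℤ) < a := by exact_mod_cast ha
        nlinarith
      have := hcl m.toNat n hn
      rw [Int.toNat_of_nonneg hm0, ← hm] at this
      exact (hh n).1.2 (by simpa using this)
    · intro hn
      by_contra hm
      have := (hh n).2 n ⟨rfl, hm⟩
      omega
  have hc : ∀ r, ((h r : ℤ) : ZMod a) = r := fun r => (hh r).1.1
  refine ⟨h, ⟨hc, ?_, ?_⟩, hrel⟩
  · intro r
    refine (hh (r + b)).2 _ ⟨?_, ?_⟩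
    · push_cast; rw [hc]
    · intro hm
      have := h2 _ hm
      rw [add_sub_cancel_right] at this
      exact (hh r).1.2 this
  · obtain ⟨q, hq⟩ := exists_q hc
    have := charge hq hrel
    rw [sum_congr rfl (fun r _ => hq r), sum_add_distrib, ← mul_sum, this, mul_zero, add_zero,
      two_sum_val]

lemma exists_d {a b : ℕ} [NeZero a] (hb : 0 < b) {h : ZMod a → ℤ} (hh : h ∈ HSet a b) :
    ∃ d : YoungDiagram, (d.IsCore a ∧ d.IsCore b) ∧ Rel d h := by
  have ha : 0 < a := Nat.pos_of_ne_zero (NeZero.ne a)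
  obtain ⟨hc, hle, hsum⟩ := hh
  obtain ⟨q, hq⟩ := exists_q hc
  have hq0 : ∑ r, q r = 0 := by
    rw [sum_congr rfl (fun r _ => hq r), sum_add_distrib, ← mul_sum, mul_add, two_sum_val] at hsum
    have h0 : (a : ℤ) ≠ 0 := by exact_mod_cast ha.ne'
    have : (a : ℤ) * ∑ r, q r = 0 := by linarith
    exact (mul_eq_zero.1 this).resolve_left h0
  obtain ⟨K, -, hK⟩ := exists_K ⊥ q
  obtain ⟨d, hd⟩ := exists_diagram ((win q K).image pos) (a * K) (by
    rw [card_image_of_injective _ pos_inj, win, card_sigma]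
    zify
    simp only [Int.card_Ico]
    rw [sum_congr rfl (fun r _ => Int.toNat_of_nonneg (by have := hK r; omega))]
    simp [sum_add_distrib, hq0, ZMod.card]) (fun w hw => ((mem_win hq K w).1 hw).1)
  have hrel : Rel d h := by
    intro n
    rw [hd, mem_win hq]
    constructor
    · rintro (h1 | h1)
      · refine lt_of_lt_of_le h1 ?_
        rw [hq]
        push_cast
        have h2 := hK n
        have h3 : (0 : ℤ) < a := by exact_mod_cast ha
        have h4 : (0 : ℤ) ≤ (n : ZMod a).val := by positivity
        nlinarith
      · exact h1.2
    · intro h1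
      by_cases h2 : n < -((a * K : ℕ) : ℤ)
      · exact Or.inl h2
      · exact Or.inr ⟨by omega, h1⟩
  refine ⟨d, ⟨?_, ?_⟩, hrel⟩
  · rw [core_iff d a ha]
    intro n hn
    rw [hrel] at hn ⊢
    push_cast
    rw [ZMod.natCast_self, sub_zero]
    omega
  · rw [core_iff d b hb]
    intro n hn
    rw [hrel] at hn ⊢
    have := hle ((n - b : ℤ) : ZMod a)
    push_cast at this ⊢
    rw [sub_add_cancel] at this
    omega
end AC

namespace AC
open Finset

noncomputable def psi (a b : ℕ) (x : (ZMod a → ℤ) × ZMod a) : ZMod a → ℕ := fun k =>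
  ((x.1 ((x.2 + k) * b) + b - x.1 ((x.2 + k + 1) * b)) / a).toNat

lemma psi_spec {a b : ℕ} [NeZero a] {h : ZMod a → ℤ} (hh : h ∈ HSet a b) (k0 k : ZMod a) :
    (a : ℤ) * psi a b (h, k0) k = h ((k0 + k) * b) + b - h ((k0 + k + 1) * b) := by
  obtain ⟨hc, hle, -⟩ := hh
  have ha : (0 : ℤ) < a := by exact_mod_cast Nat.pos_of_ne_zero (NeZero.ne a)
  have hd : (a : ℤ) ∣ h ((k0 + k) * b) + b - h ((k0 + k + 1) * b) := by
    rw [← ZMod.intCast_zmod_eq_zero_iff_dvd]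
    push_cast
    rw [hc, hc]; ring
  have hnn : 0 ≤ h ((k0 + k) * b) + b - h ((k0 + k + 1) * b) := by
    have := hle ((k0 + k) * b)
    rw [show (k0 + k) * (b : ZMod a) + b = (k0 + k + 1) * b by ring] at this
    omega
  simp only [psi]
  rw [Int.toNat_of_nonneg (Int.ediv_nonneg hnn ha.le), Int.mul_ediv_cancel' hd]

lemma psi_sum {a b : ℕ} [NeZero a] {h : ZMod a → ℤ} (hh : h ∈ HSet a b) (k0 : ZMod a) (n : ℕ) :
    h ((k0 + n) * b) - h (k0 * b)
      = ∑ i ∈ range n, ((b : ℤ) - a * psi a b (h, k0) (i : ZMod a)) := by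
  induction n with
  | zero => simp
  | succ n ih =>
    rw [sum_range_succ, ← ih, psi_spec hh]
    push_cast
    rw [show k0 + ((n : ZMod a) + 1) = k0 + n + 1 by ring]
    ring

lemma sum_mul_b {a b : ℕ} [NeZero a] (hab : Nat.Coprime a b) (k0 : ZMod a) (f : ZMod a → ℤ) :
    ∑ k, f ((k0 + k) * b) = ∑ r, f r := by
  have hu : (b : ZMod a) * (b : ZMod a)⁻¹ = 1 := ZMod.coe_mul_inv_eq_one b hab.symm
  refine Fintype.sum_bijective (fun k => (k0 + k) * (b : ZMod a)) ?_ _ _ (fun _ => rfl)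
  refine Function.bijective_iff_has_inverse.2 ⟨fun r => r * (b : ZMod a)⁻¹ - k0, ?_, ?_⟩
  · intro k
    simp only
    rw [mul_assoc, hu]; ring
  · intro r
    simp only
    linear_combination r * hu

lemma psi_bij {a b : ℕ} [NeZero a] (hab : Nat.Coprime a b) :
    Set.BijOn (psi a b) (HSet a b ×ˢ Set.univ) (piAntidiag (univ : Finset (ZMod a)) b) := by
  have ha : (a : ℤ) ≠ 0 := by exact_mod_cast NeZero.ne a
  have hu : (b : ZMod a) * (b : ZMod a)⁻¹ = 1 := ZMod.coe_mul_inv_eq_one b hab.symm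
  refine ⟨?_, ?_, ?_⟩
  · rintro ⟨h, k0⟩ ⟨hh, -⟩
    simp only [mem_coe, mem_piAntidiag, mem_univ, implies_true, and_true]
    have h1 : (a : ℤ) * ∑ k, (psi a b (h, k0) k : ℤ) = a * b := by
      rw [mul_sum, sum_congr rfl (fun k _ => psi_spec hh k0 k), sum_sub_distrib, sum_add_distrib,
        sum_mul_b hab k0 h,
        sum_congr rfl (fun k _ => show h ((k0 + k + 1) * b) = h ((k0 + 1 + k) * b) by
          rw [add_right_comm]),
        sum_mul_b hab (k0 + 1) h]
      simp [ZMod.card]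
    have h2 := mul_left_cancel₀ ha h1
    exact_mod_cast h2
  · rintro ⟨h, k0⟩ ⟨hh, -⟩ ⟨g, l0⟩ ⟨hg, -⟩ heq
    simp only at hh hg
    have h1 : ∀ k : ZMod a, h ((k0 + k) * b) - h (k0 * b) = g ((l0 + k) * b) - g (l0 * b) := by
      intro k
      have e1 := psi_sum hh k0 k.val
      have e2 := psi_sum hg l0 k.val
      rw [heq, ← e2] at e1
      simpa using e1
    have h2 : ∑ k : ZMod a, (h ((k0 + k) * b) - h (k0 * b))
        = ∑ k : ZMod a, (g ((l0 + k) * b) - g (l0 * b)) := sum_congr rfl fun k _ => h1 k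
    rw [sum_sub_distrib, sum_sub_distrib, sum_mul_b hab, sum_mul_b hab] at h2
    simp only [sum_const, card_univ, ZMod.card, nsmul_eq_mul] at h2
    have h3 : (a : ℤ) * h (k0 * b) = a * g (l0 * b) := by
      have := hh.2.2
      have := hg.2.2
      linarith
    have h4 := mul_left_cancel₀ ha h3
    have h5 := congrArg (fun z : ℤ => (z : ZMod a)) h4
    simp only [hh.1, hg.1] at h5
    have h6 : k0 = l0 := by
      linear_combination (b : ZMod a)⁻¹ * h5 - (k0 - l0) * hu
    subst h6
    congr 1
    funext r
    have h7 := h1 (r * (b : ZMod a)⁻¹ - k0)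
    rw [show (k0 + (r * (b : ZMod a)⁻¹ - k0)) * b = r by linear_combination r * hu] at h7
    linarith
  · intro z hz
    simp only [mem_coe, mem_piAntidiag, mem_univ, implies_true, and_true] at hz
    let g : ℕ → ℤ := fun n => ∑ i ∈ range n, ((b : ℤ) - a * z (i : ZMod a))
    let G : ZMod a → ℤ := fun x => g x.val
    have hga : g a = 0 := by
      have h1 : ∑ i ∈ range a, (z (i : ZMod a) : ℤ) = b := by
        rw [← sum_val a (fun i => (z (i : ZMod a) : ℤ)), ← hz]
        push_cast
        exact sum_congr rfl fun r _ => by rw [ZMod.natCast_zmod_val]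
      simp only [g, sum_sub_distrib, ← mul_sum, h1]
      simp
    have hG : ∀ x, G (x + 1) = G x + b - a * z x := by
      intro x
      have h1 : g (x.val + 1) = G x + b - a * z x := by
        simp only [g, G, sum_range_succ, ZMod.natCast_zmod_val]; ring
      rw [← h1]
      have hlt := ZMod.val_lt x
      rcases Nat.lt_or_ge (x.val + 1) a with h2 | h2
      · have : (x + 1).val = x.val + 1 := by
          rw [← ZMod.val_cast_of_lt h2]
          push_cast
          rw [ZMod.natCast_zmod_val]
        simp only [G, this]
      · have h3 : x.val + 1 = a := by omega
        have h4 : x + 1 = 0 := by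
          have := congrArg (fun n : ℕ => (n : ZMod a)) h3
          simpa using this
        rw [h3, hga, h4]
        simp [G, g]
    have hGc : ∀ x, ((G x : ℤ) : ZMod a) = x * b := by
      intro x
      simp [G, g]
    have hGs : ∃ T : ℤ, 2 * ∑ x, G x = b * (a * (a - 1)) + 2 * a * T := by
      refine ⟨- ∑ x : ZMod a, ∑ i ∈ range x.val, (z (i : ZMod a) : ℤ), ?_⟩
      rw [← two_sum_val a]
      have : ∑ x, G x = ∑ x : ZMod a, ((b : ℤ) * x.val
          - a * ∑ i ∈ range x.val, (z (i : ZMod a) : ℤ)) := by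
        refine sum_congr rfl fun x _ => ?_
        simp only [G, g, sum_sub_distrib, ← mul_sum]
        simp [mul_comm]
      rw [this, sum_sub_distrib, ← mul_sum, ← mul_sum]
      ring
    obtain ⟨T, hT⟩ := hGs
    have hpar : ∃ s : ℤ, ((a : ℤ) - 1) * (1 - b) = 2 * s := by
      rcases Nat.even_or_odd' a with ⟨m, hm | hm⟩
      · rcases Nat.even_or_odd' b with ⟨n, hn | hn⟩
        · exfalso
          have : 2 ∣ Nat.gcd a b := Nat.dvd_gcd ⟨m, hm⟩ ⟨n, hn⟩
          rw [hab] at this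
          omega
        · exact ⟨((a : ℤ) - 1) * (-n), by rw [hn]; push_cast; ring⟩
      · exact ⟨m * (1 - b), by rw [hm]; push_cast; ring⟩
    obtain ⟨s, hs⟩ := hpar
    let c : ℤ := s - T
    let k0 : ZMod a := (c : ZMod a) * (b : ZMod a)⁻¹
    let h : ZMod a → ℤ := fun y => c + G (y * (b : ZMod a)⁻¹ - k0)
    have hhk : ∀ k, h ((k0 + k) * b) = c + G k := by
      intro k
      simp only [h]
      congr 2
      linear_combination (k0 + k) * hu
    have hH : h ∈ HSet a b := by
      refine ⟨?_, ?_, ?_⟩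
      · intro r
        simp only [h, k0]
        push_cast
        rw [hGc]
        linear_combination (r - c) * hu
      · intro r
        simp only [h]
        rw [show (r + b) * (b : ZMod a)⁻¹ - k0 = (r * (b : ZMod a)⁻¹ - k0) + 1 by
          linear_combination hu, hG]
        have : (0 : ℤ) ≤ a * z (r * (b : ZMod a)⁻¹ - k0) := by positivity
        linarith
      · rw [← sum_mul_b hab k0 h, sum_congr rfl (fun k _ => hhk k), sum_add_distrib, mul_add, hT]
        simp only [sum_const, card_univ, ZMod.card, nsmul_eq_mul, c]
        linear_combination - (a : ℤ) * hs
    refine ⟨(h, k0), ⟨hH, Set.mem_univ _⟩, ?_⟩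
    funext k
    have h1 := psi_spec hH k0 k
    rw [hhk, add_assoc k0 k 1, hhk, hG] at h1
    have h2 : (a : ℤ) * psi a b (h, k0) k = a * z k := by linarith
    exact_mod_cast mul_left_cancel₀ ha h2

lemma hset_finite {a b : ℕ} [NeZero a] (hab : Nat.Coprime a b) : (HSet a b).Finite := by
  have h1 := (psi_bij hab).finite_iff_finite.2 (finite_toSet _)
  have := h1.image Prod.fst
  rwa [Set.fst_image_prod _ Set.univ_nonempty] at this

lemma sum_kk (a : ℕ) (t : ℚ) : ∑ k ∈ range a, (k : ℚ) * (t - k)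
    = t * (a * (a - 1) / 2) - a * (a - 1) * (2 * a - 1) / 6 := by
  induction a with
  | zero => simp
  | succ n ih => rw [sum_range_succ, ih]; push_cast; ring

lemma sum_sq (a : ℕ) : 6 * ∑ k ∈ range a, (k : ℤ) ^ 2 = a * (a - 1) * (2 * a - 1) := by
  induction a with
  | zero => simp
  | succ n ih => rw [sum_range_succ, mul_add, ih]; push_cast; ring

lemma inner_sum {a b : ℕ} [NeZero a] (hab : Nat.Coprime a b) {h : ZMod a → ℤ}
    (hh : h ∈ HSet a b) :
    2 * ∑ k0 : ZMod a, ∑ k : ZMod a, (h ((k0 + k) * b) - h (k0 * b)) ^ 2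
      = 4 * a * ∑ r, (h r) ^ 2 - (a * (a - 1)) ^ 2 := by
  have h1 : ∀ k0 : ZMod a, ∑ k : ZMod a, (h ((k0 + k) * b) - h (k0 * b)) ^ 2
      = ∑ r, (h r) ^ 2 - 2 * h (k0 * b) * ∑ r, h r + a * h (k0 * b) ^ 2 := by
    intro k0
    rw [sum_mul_b hab k0 (fun x => (x |> h) - h (k0 * b) |> fun y => y ^ 2)]
    have : (a : ℤ) * h (k0 * b) ^ 2 = ∑ r : ZMod a, h (k0 * b) ^ 2 := by simp [ZMod.card]
    rw [this, mul_sum, ← sum_sub_distrib, ← sum_add_distrib]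
    exact sum_congr rfl fun r _ => by ring
  have e1 := sum_mul_b hab 0 h
  have e2 := sum_mul_b hab 0 (fun x => h x ^ 2)
  simp only [zero_add] at e1 e2
  rw [sum_congr rfl (fun k _ => h1 k), sum_add_distrib, sum_sub_distrib, ← sum_mul, ← mul_sum,
    ← mul_sum, e1, e2]
  simp only [sum_const, card_univ, ZMod.card, nsmul_eq_mul]
  have := hh.2.2
  rw [← this]
  ring

lemma main {a b : ℕ} [NeZero a] (hab : Nat.Coprime a b) :
    6 * ∑ h ∈ (hset_finite hab).toFinset,
      ∑ k0 : ZMod a, ∑ k : ZMod a, ((h ((k0 + k) * b) - h (k0 * b) : ℤ) : ℚ) ^ 2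
      = (hset_finite hab).toFinset.card * (b * (a + b) * a ^ 2 * (a - 1)) := by
  set H := (hset_finite hab).toFinset with hH
  have hmem : ∀ h, h ∈ H ↔ h ∈ HSet a b := fun h => by simp [hH]
  have hbij := psi_bij hab
  set P := piAntidiag (univ : Finset (ZMod a)) b with hP
  have hm : ∀ x ∈ H ×ˢ (univ : Finset (ZMod a)), psi a b x ∈ P := by
    intro x hx
    exact hbij.mapsTo ⟨(hmem _).1 (mem_product.1 hx).1, Set.mem_univ _⟩
  have hi : ∀ x ∈ H ×ˢ (univ : Finset (ZMod a)), ∀ y ∈ H ×ˢ (univ : Finset (ZMod a)),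
      psi a b x = psi a b y → x = y := by
    intro x hx y hy hxy
    exact hbij.injOn ⟨(hmem _).1 (mem_product.1 hx).1, Set.mem_univ _⟩
      ⟨(hmem _).1 (mem_product.1 hy).1, Set.mem_univ _⟩ hxy
  have hs : ∀ z ∈ P, ∃ x, ∃ _ : x ∈ H ×ˢ (univ : Finset (ZMod a)), psi a b x = z := by
    intro z hz
    obtain ⟨x, hx, hxz⟩ := hbij.surjOn hz
    exact ⟨x, mem_product.2 ⟨(hmem _).2 hx.1, mem_univ _⟩, hxz⟩
  have hcard : H.card * a = P.card := by
    have := card_bij (fun x _ => psi a b x) hm (fun x hx y hy => hi x hx y hy) hs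
    rwa [card_product, card_univ, ZMod.card] at this
  have hsum : ∑ h ∈ H,
      ∑ k0 : ZMod a, ∑ k : ZMod a, ((h ((k0 + k) * b) - h (k0 * b) : ℤ) : ℚ) ^ 2
      = ∑ z ∈ P, ∑ k : ZMod a, (∑ i ∈ (range k.val).image (fun i : ℕ => (i : ZMod a)),
          ((b : ℚ) - a * z i)) ^ 2 := by
    rw [← sum_product']
    refine sum_bij (fun x _ => psi a b x) hm (fun x hx y hy => hi x hx y hy) hs ?_
    rintro ⟨h, k0⟩ hx
    have hh := (hmem _).1 (mem_product.1 hx).1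
    refine sum_congr rfl fun k _ => ?_
    have := psi_sum hh k0 k.val
    rw [ZMod.natCast_zmod_val] at this
    simp only
    rw [this, sum_image]
    · push_cast; rfl
    · intro i hi j hj hij
      simp only [coe_range, Set.mem_Iio] at hi hj
      have hk := ZMod.val_lt k
      have := congrArg ZMod.val hij
      rwa [ZMod.val_cast_of_lt (hi.trans hk), ZMod.val_cast_of_lt (hj.trans hk)] at this
  have hA : ∀ k : ZMod a, ((range k.val).image (fun i : ℕ => (i : ZMod a))).card = k.val := by
    intro k
    rw [card_image_of_injOn, card_range]
    intro i hi j hj hij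
    simp only [coe_range, Set.mem_Iio] at hi hj
    have hk := ZMod.val_lt k
    have := congrArg ZMod.val hij
    rwa [ZMod.val_cast_of_lt (hi.trans hk), ZMod.val_cast_of_lt (hj.trans hk)] at this
  have hv : ((a : ℚ) + 1) * ∑ z ∈ P, ∑ k : ZMod a,
      (∑ i ∈ (range k.val).image (fun i : ℕ => (i : ZMod a)), ((b : ℚ) - a * z i)) ^ 2
      = (∑ k : ZMod a, (k.val : ℚ) * (a - k.val)) * (b * (a + b) * P.card) := by
    rw [sum_comm, mul_sum, sum_mul]
    refine sum_congr rfl fun k _ => ?_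
    have := variance b ((range k.val).image (fun i : ℕ => (i : ZMod a)))
    rw [hA, ZMod.card, ← hP] at this
    rw [this]; ring
  have hk : ∑ k : ZMod a, (k.val : ℚ) * (a - k.val) = a * (a - 1) * (a + 1) / 6 := by
    have e : ∑ k : ZMod a, (k.val : ℚ) * (a - k.val)
        = ((∑ k : ZMod a, (k.val : ℤ) * (a - k.val) : ℤ) : ℚ) := by push_cast; rfl
    rw [e, sum_val a (fun i => (i : ℤ) * (a - i))]
    push_cast
    rw [sum_kk]; ring
  rw [hk, ← hcard] at hv
  have ha1 : (a : ℚ) + 1 ≠ 0 := by positivity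
  rw [hsum]
  apply mul_left_cancel₀ ha1
  push_cast at hv
  linear_combination 6 * hv

end AC

theorem stmt_1 (a b : ℕ) (ha : 0 < a) (hb : 0 < b) (hab : Nat.Coprime a b) :
    (∑ᶠ d ∈ {d : YoungDiagram | d.IsCore a ∧ d.IsCore b}, (d.cells.card : ℚ))
        / ({d : YoungDiagram | d.IsCore a ∧ d.IsCore b}.ncard : ℚ)
      = ((a : ℚ) - 1) * ((b : ℚ) - 1) * ((a : ℚ) + b + 1) / 24 := by
  classical
  have : NeZero a := ⟨ha.ne'⟩
  set C : Set YoungDiagram := {d : YoungDiagram | d.IsCore a ∧ d.IsCore b} with hC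
  have hex : ∀ d : YoungDiagram, ∃ h : ZMod a → ℤ, d ∈ C → h ∈ AC.HSet a b ∧ AC.Rel d h := by
    intro d
    by_cases hd : d ∈ C
    · obtain ⟨h, h1, h2⟩ := AC.exists_h hb hd.1 hd.2
      exact ⟨h, fun _ => ⟨h1, h2⟩⟩
    · exact ⟨fun _ => 0, fun h => absurd h hd⟩
  choose φ hφ using hex
  have hbij : Set.BijOn φ C (AC.HSet a b) := by
    refine ⟨fun d hd => (hφ d hd).1, ?_, ?_⟩
    · intro d hd e he hde
      have h1 := (hφ d hd).2
      rw [hde] at h1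
      exact AC.rel_left h1 (hφ e he).2
    · intro h hh
      obtain ⟨d, hd, hr⟩ := AC.exists_d hb hh
      exact ⟨d, hd, AC.rel_right (hφ d hd).2 hr (hφ d hd).1.1 hh.1⟩
  have hfin := AC.hset_finite hab
  set F : (ZMod a → ℤ) → ℚ := fun h =>
    (((∑ r, (h r) ^ 2 : ℤ) : ℚ) - a * (a - 1) * (2 * a - 1) / 6) / (2 * a) with hF
  have ha0 : (a : ℚ) ≠ 0 := by exact_mod_cast ha.ne'
  have hval : ∀ d ∈ C, (d.cells.card : ℚ) = F (φ d) := by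
    intro d hd
    have h1 := AC.size (hφ d hd).1.1 (hφ d hd).2
    have h2 := AC.sum_sq a
    rw [← AC.sum_val a (fun i => (i : ℤ) ^ 2)] at h2
    have h1' : (2 : ℚ) * a * d.cells.card
        = ((∑ r, (φ d r) ^ 2 : ℤ) : ℚ) - ((∑ r : ZMod a, (r.val : ℤ) ^ 2 : ℤ) : ℚ) := by
      exact_mod_cast h1
    have h2' : (6 : ℚ) * ((∑ r : ZMod a, (r.val : ℤ) ^ 2 : ℤ) : ℚ)
        = a * (a - 1) * (2 * a - 1) := by exact_mod_cast h2
    simp only [hF]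
    rw [eq_div_iff (by positivity)]
    linear_combination h1' - h2' / 6
  have hS : ∑ᶠ d ∈ C, (d.cells.card : ℚ) = ∑ h ∈ hfin.toFinset, F h := by
    rw [finsum_mem_eq_of_bijOn φ hbij hval, finsum_mem_eq_finite_toFinset_sum _ hfin]
  have hN : C.ncard = hfin.toFinset.card := by
    rw [hbij.ncard_eq, Set.ncard_eq_toFinset_card _ hfin]
  have hpos : (hfin.toFinset.card : ℚ) ≠ 0 := by
    have hne : (hfin.toFinset).Nonempty := by
      refine ⟨φ ⊥, hfin.mem_toFinset.2 (hφ ⊥ ⟨?_, ?_⟩).1⟩ <;>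
      · intro c hc
        simp at hc
    exact_mod_cast hne.card_pos.ne'
  rw [hS, hN, div_eq_iff hpos]
  have hmain := AC.main hab
  have hinner : ∀ h ∈ hfin.toFinset,
      ∑ k0 : ZMod a, ∑ k : ZMod a, ((h ((k0 + k) * b) - h (k0 * b) : ℤ) : ℚ) ^ 2
      = 4 * a ^ 2 * F h + a ^ 2 * (a - 1) * (a + 1) / 6 := by
    intro h hh
    have h1 := AC.inner_sum hab (hfin.mem_toFinset.1 hh)
    have h1' : (2 : ℚ) * ∑ k0 : ZMod a, ∑ k : ZMod a,
        ((h ((k0 + k) * b) - h (k0 * b) : ℤ) : ℚ) ^ 2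
        = 4 * a * ((∑ r, (h r) ^ 2 : ℤ) : ℚ) - (a * (a - 1)) ^ 2 := by
      exact_mod_cast h1
    simp only [hF]
    field_simp
    linear_combination 6 * h1'
  rw [Finset.sum_congr rfl hinner, Finset.sum_add_distrib, ← Finset.mul_sum] at hmain
  simp only [Finset.sum_const, nsmul_eq_mul] at hmain
  have ha2 : (24 : ℚ) * a ^ 2 ≠ 0 := by positivity
  apply mul_left_cancel₀ ha2
  linear_combination hmain
end

section
/- The variance of the number-of-boxes statistic on plane partitions fitting inside an a×b×c box is abc(a+b+c)/12. -/
/-- A plane partition inside an `a × b × c` box: an `a × b` array of integers in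
`[0, c]`, weakly decreasing along rows and columns. -/
def PlanePartitionInBox (a b c : ℕ) : Type :=
  {π : Fin a → Fin b → Fin (c + 1) //
    ∀ i i' : Fin a, ∀ j j' : Fin b, i ≤ i' → j ≤ j' → π i' j' ≤ π i j}

noncomputable instance (a b c : ℕ) : Fintype (PlanePartitionInBox a b c) := by
  unfold PlanePartitionInBox; classical infer_instance

/-- The number of boxes of a plane partition (the sum of its entries). -/
def PlanePartitionInBox.size {a b c : ℕ} (π : PlanePartitionInBox a b c) : ℕ :=
  ∑ i : Fin a, ∑ j : Fin b, (π.1 i j : ℕ)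

open Finset Polynomial

namespace MacBox

/-- Extension of a finite sequence by zero. -/
def ext {n : ℕ} (m : Fin n → ℕ) : ℕ → ℕ := fun i => if h : i < n then m ⟨i, h⟩ else 0

/-- The set of rows interlacing with `l`. -/
def box (n : ℕ) (l : ℕ → ℕ) : Finset (Fin n → ℕ) :=
  Fintype.piFinset fun i : Fin n => Finset.Ico (l i) (l (i + 1))

open Classical in
/-- Strict Gelfand–Tsetlin patterns with top row `l`, top row excluded. -/
noncomputable def S : ℕ → (ℕ → ℕ) → Finset (ℕ → ℕ → ℕ)
  | 0, _ => {fun _ _ => 0}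
  | n + 1, l => (box n l).biUnion fun m =>
      (S n (ext m)).image fun g => Function.update g n (ext m)

/-- Validity. -/
def Valid (n : ℕ) (l : ℕ → ℕ) (g : ℕ → ℕ → ℕ) : Prop :=
  (∀ k i, (n ≤ k ∨ k ≤ i) → g k i = 0) ∧
  ∀ k i, i < k → k < n →
    Function.update g n l (k + 1) i ≤ g k i ∧ g k i < Function.update g n l (k + 1) (i + 1)

theorem mem_S (n : ℕ) : ∀ (l : ℕ → ℕ) (g : ℕ → ℕ → ℕ), g ∈ S n l ↔ Valid n l g := by
  induction n with
  | zero =>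
    intro l g
    simp only [S, Finset.mem_singleton, Valid]
    constructor
    · rintro rfl
      simp
    · rintro ⟨h, -⟩
      funext k i
      exact h k i (by simp)
  | succ n ih =>
    intro l g
    simp only [S, Finset.mem_biUnion, Finset.mem_image, ih, box, Fintype.mem_piFinset,
      Finset.mem_Ico]
    constructor
    · rintro ⟨m, hm, g, ⟨h1, h2⟩, rfl⟩
      refine ⟨?_, ?_⟩
      · intro k i hk
        by_cases hkn : k = n
        · subst hkn
          simp only [Function.update_self, ext]
          rw [dif_neg (by omega)]
        · rw [Function.update_of_ne hkn]
          exact h1 k i (by omega)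
      · intro k i hik hk
        by_cases hkn : k = n
        · subst hkn
          simp only [Function.update_self, ext]
          rw [dif_pos hik]
          exact hm ⟨i, hik⟩
        · rw [Function.update_of_ne hkn, Function.update_of_ne (by omega : k + 1 ≠ n + 1)]
          exact h2 k i hik (by omega)
    · rintro ⟨h1, h2⟩
      have hext : ext (fun i : Fin n => g n i) = g n := by
        funext i
        simp only [ext]
        split_ifs with h
        · rfl
        · exact (h1 n i (by omega)).symm
      refine ⟨fun i => g n i, ?_, Function.update g n 0, ⟨?_, ?_⟩, ?_⟩
      · intro i
        have := h2 n i i.2 (by omega)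
        simpa using this
      · intro k i hk
        by_cases hkn : k = n
        · subst hkn; simp
        · rw [Function.update_of_ne hkn]
          exact h1 k i (by omega)
      · intro k i hik hk
        have := h2 k i hik (by omega)
        rw [Function.update_of_ne (by omega : k + 1 ≠ n + 1)] at this
        rw [hext, Function.update_idem, Function.update_eq_self,
          Function.update_of_ne (by omega : k ≠ n)]
        exact this
      · rw [hext, Function.update_idem, Function.update_eq_self]

/-- Weight. -/
def wt (n : ℕ) (g : ℕ → ℕ → ℕ) : ℕ := ∑ k ∈ range n, ∑ i ∈ range k, g k i

section
variable {R : Type*} [CommRing R]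

theorem sum_S_succ (q : R) (n : ℕ) (l : ℕ → ℕ) :
    ∑ g ∈ S (n + 1) l, q ^ wt (n + 1) g =
      ∑ m ∈ box n l, q ^ (∑ i, m i) * ∑ g ∈ S n (ext m), q ^ wt n g := by
  classical
  simp only [S]
  rw [Finset.sum_biUnion]
  · refine Finset.sum_congr rfl fun m hm => ?_
    rw [Finset.sum_image, Finset.mul_sum]
    · refine Finset.sum_congr rfl fun g hg => ?_
      rw [← pow_add]
      congr 1
      unfold wt
      rw [Finset.sum_range_succ, add_comm]
      congr 1
      · rw [← Fin.sum_univ_eq_sum_range]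
        refine Finset.sum_congr rfl fun i _ => ?_
        simp [ext]
      · refine Finset.sum_congr rfl fun k hk => ?_
        rw [Finset.mem_range] at hk
        rw [Function.update_of_ne (by omega)]
    · intro g hg g' hg' h
      simp only [Finset.mem_coe, mem_S] at hg hg'
      funext k i
      by_cases hk : k = n
      · rw [hg.1 k i (by omega), hg'.1 k i (by omega)]
      · have := congrFun (congrFun h k) i
        simpa [Function.update_of_ne hk] using this
  · intro m hm m' hm' hne
    rw [Function.onFun, Finset.disjoint_left]
    intro g hg hg'
    apply hne
    simp only [Finset.mem_image] at hg hg'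
    obtain ⟨g1, -, rfl⟩ := hg
    obtain ⟨g2, -, h⟩ := hg'
    have := congrFun h n
    simp only [Function.update_self] at this
    funext i
    have := congrFun this i
    simpa [ext] using this.symm

theorem step (q : R) (n : ℕ) (l : ℕ → ℕ) (hl : ∀ i, i < n → l i ≤ l (i + 1)) :
    (∏ j : Fin n, (q ^ (j + 1 : ℕ) - 1)) *
      ∑ m ∈ box n l, q ^ (∑ i, m i) * (Matrix.vandermonde fun i => q ^ m i).det
    = (Matrix.vandermonde fun i : Fin (n + 1) => q ^ l i).det := by
  have h1 : (Matrix.vandermonde fun i : Fin (n + 1) => q ^ l i).det =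
      (Matrix.of fun i j : Fin n => (q ^ l (i + 1)) ^ (j + 1 : ℕ) - (q ^ l i) ^ (j + 1 : ℕ)).det := by
    rw [Matrix.det_eq_of_forall_row_eq_smul_add_pred (B := Matrix.of
      (Fin.cons (fun j : Fin (n + 1) => (q ^ l 0) ^ (j : ℕ))
        (fun (i : Fin n) (j : Fin (n + 1)) => (q ^ l (i + 1)) ^ (j : ℕ) - (q ^ l i) ^ (j : ℕ))))
      (fun _ => (1 : R))]
    · rw [Matrix.det_succ_column_zero, Fin.sum_univ_succ]
      simp [Matrix.submatrix]
    · intro j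
      simp [Matrix.vandermonde]
    · intro i j
      simp [Matrix.vandermonde]
  have h2 : (Matrix.of fun i j : Fin n =>
      (q ^ l (i + 1)) ^ (j + 1 : ℕ) - (q ^ l i) ^ (j + 1 : ℕ)) =
      Matrix.of fun i j : Fin n => (q ^ (j + 1 : ℕ) - 1) *
        (fun i j : Fin n => ∑ m ∈ Finset.Ico (l i) (l (i + 1)), (q ^ (j + 1 : ℕ)) ^ m) i j := by
    ext i j
    simp only [Matrix.of_apply]
    rw [mul_comm, geom_sum_Ico_mul _ (hl i i.2)]
    simp only [← pow_mul, mul_comm]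
  rw [h1, h2]
  have h3 := Matrix.det_mul_row (fun j : Fin n => q ^ (j + 1 : ℕ) - 1)
    (Matrix.of fun i j : Fin n => ∑ m ∈ Finset.Ico (l i) (l (i + 1)), (q ^ (j + 1 : ℕ)) ^ m)
  simp only [Matrix.of_apply] at h3
  rw [h3]
  congr 1
  have h4 := (Matrix.detRowAlternating (R := R) (n := Fin n)).toMultilinearMap.map_sum_finset
    (fun (i : Fin n) (m : ℕ) => fun j : Fin n => (q ^ (j + 1 : ℕ)) ^ m)
    (fun i : Fin n => Finset.Ico (l i) (l (i + 1)))
  have h5 : (Matrix.of fun i j : Fin n =>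
      ∑ m ∈ Finset.Ico (l i) (l (i + 1)), (q ^ (j + 1 : ℕ)) ^ m) =
      fun i : Fin n => ∑ m ∈ Finset.Ico (l i) (l (i + 1)),
        (fun j : Fin n => (q ^ (j + 1 : ℕ)) ^ m) := by
    funext i j
    simp [Finset.sum_apply]
  rw [h5]
  refine Eq.trans ?_ h4.symm
  refine Finset.sum_congr rfl fun m _ => ?_
  have h6 := Matrix.det_mul_column (fun i : Fin n => q ^ m i)
    (Matrix.vandermonde fun i => q ^ m i)
  rw [← Finset.prod_pow_eq_pow_sum, ← h6]
  show _ = Matrix.det _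
  congr 1
  ext i j
  simp only [Matrix.of_apply, Matrix.vandermonde_apply, ← pow_mul, ← pow_add]
  congr 1
  ring

/-- Normalising constant. -/
def C (q : R) (n : ℕ) : R := ∏ k ∈ range n, ∏ j ∈ range k, (q ^ (j + 1) - 1)

theorem main_det (q : R) (n : ℕ) : ∀ l : ℕ → ℕ, (∀ i, i + 1 < n → l i ≤ l (i + 1)) →
    C q n * ∑ g ∈ S n l, q ^ wt n g = (Matrix.vandermonde fun i : Fin n => q ^ l i).det := by
  induction n with
  | zero => intro l _; simp [C, S, wt]
  | succ n ih =>
    intro l hl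
    rw [← step q n l (fun i hi => hl i (by omega)), sum_S_succ, C, Finset.prod_range_succ, ← C,
      ← Fin.prod_univ_eq_prod_range (fun j => q ^ (j + 1) - 1) n, mul_comm (C q n), mul_assoc]
    congr 1
    rw [Finset.mul_sum]
    refine Finset.sum_congr rfl fun m hm => ?_
    rw [mul_left_comm, ih (ext m)]
    · simp [ext]
    · intro i hi
      simp only [box, Fintype.mem_piFinset, Finset.mem_Ico] at hm
      simp only [ext]
      rw [dif_pos (by omega), dif_pos hi]
      have a1 := hm ⟨i, by omega⟩
      have a2 := hm ⟨i + 1, hi⟩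
      simp only at a1 a2
      omega

theorem vand_prod (n : ℕ) (v : ℕ → R) :
    (Matrix.vandermonde fun i : Fin n => v i).det =
      ∏ k ∈ range n, ∏ i ∈ range k, (v k - v i) := by
  rw [Matrix.det_vandermonde]
  induction n with
  | zero => simp
  | succ n ih =>
    rw [Finset.prod_range_succ, ← ih, Fin.prod_univ_castSucc]
    have : ∀ i : Fin n, ∏ j ∈ Finset.Ioi i.castSucc, (v (j : Fin (n+1)) - v i.castSucc) =
      (∏ j ∈ Finset.Ioi i, (v j - v i)) * (v n - v i) := by
      intro i
      have : Finset.Ioi i.castSucc = Finset.cons (Fin.last n)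
          ((Finset.Ioi i).map Fin.castSuccEmb) (by simp) := by
        ext j
        simp only [Finset.mem_Ioi, Finset.mem_cons, Finset.mem_map]
        refine Fin.lastCases ?_ (fun j => ?_) j
        · simp
        · simp [Fin.castSucc_ne_last]
      rw [this, Finset.prod_cons, Finset.prod_map]
      simp [mul_comm]
    simp_rw [this]
    rw [Finset.prod_mul_distrib, ← Fin.prod_univ_eq_prod_range (fun i => v n - v i) n]
    have h0 : Finset.Ioi (Fin.last n) = ∅ := by
      ext j; simp [Fin.le_last]
    rw [h0]
    simp

end

/-! ### The bijection -/

/-- Top row. -/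
def top (b c : ℕ) : ℕ → ℕ := fun i => i + if i < b then 0 else c

/-- Extension by zero of a plane partition. -/
def pext {a b c : ℕ} (π : PlanePartitionInBox a b c) (x y : ℕ) : ℕ :=
  if h : x < a ∧ y < b then (π.1 ⟨x, h.1⟩ ⟨y, h.2⟩ : ℕ) else 0

theorem pext_le {a b c : ℕ} (π : PlanePartitionInBox a b c) (x y : ℕ) : pext π x y ≤ c := by
  unfold pext
  split_ifs
  · exact Nat.lt_succ_iff.1 (Fin.is_lt _)
  · simp

theorem pext_anti {a b c : ℕ} (π : PlanePartitionInBox a b c) {x y x' y' : ℕ} (hx : x ≤ x')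
    (hy : y ≤ y') : pext π x' y' ≤ pext π x y := by
  unfold pext
  split_ifs with h1 h2
  · exact π.2 _ _ _ _ hx hy
  · omega
  · simp
  · simp

theorem pext_zero {a b c : ℕ} (π : PlanePartitionInBox a b c) (x y : ℕ) (hx : a ≤ x) :
    pext π x y = 0 := by
  unfold pext
  rw [dif_neg (by omega)]

/-- The pattern of a plane partition. -/
def toG {a b c : ℕ} (π : PlanePartitionInBox a b c) : ℕ → ℕ → ℕ := fun k i =>
  if i < k ∧ k < a + b then i + (if i < b then pext π (k - i - 1) (b - 1 - i) else c) else 0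

theorem toG_valid {a b c : ℕ} (π : PlanePartitionInBox a b c) :
    Valid (a + b) (top b c) (toG π) := by
  have key : ∀ k i, i < k → k ≤ a + b → Function.update (toG π) (a + b) (top b c) k i =
      i + (if i < b then pext π (k - i - 1) (b - 1 - i) else c) := by
    intro k i hik hk
    by_cases h : k = a + b
    · subst h
      rw [Function.update_self, top]
      split_ifs with hb
      · rw [pext_zero _ _ _ (by omega)]
      · rfl
    · rw [Function.update_of_ne h, toG, if_pos (by omega)]
  refine ⟨?_, ?_⟩
  · intro k i h
    rw [toG, if_neg (by omega)]
  · intro k i hik hk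
    have : toG π k i = i + (if i < b then pext π (k - i - 1) (b - 1 - i) else c) :=
      if_pos ⟨hik, hk⟩
    rw [key (k + 1) i (by omega) (by omega), key (k + 1) (i + 1) (by omega) (by omega), this]
    have e1 := pext_anti π (x := k - i - 1) (x' := k + 1 - i - 1) (y := b - 1 - i)
      (y' := b - 1 - i) (by omega) le_rfl
    have e2 := pext_anti π (x := k + 1 - (i + 1) - 1) (x' := k - i - 1) (y := b - 1 - (i + 1))
      (y' := b - 1 - i) (by omega) (by omega)
    have e3 := pext_le π (k - i - 1) (b - 1 - i)
    split_ifs <;> omega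

theorem chain1 {a b c : ℕ} {g : ℕ → ℕ → ℕ} (hg : Valid (a + b) (top b c) g)
    (i j d : ℕ) (h : i + j + d < a + b) :
    Function.update g (a + b) (top b c) (i + j + d + 1) i ≤
      Function.update g (a + b) (top b c) (i + j + 1) i := by
  induction d with
  | zero => rfl
  | succ d ih =>
    refine le_trans ?_ (ih (by omega))
    have := (hg.2 (i + j + d + 1) i (by omega) (by omega)).1
    rw [Function.update_of_ne (by omega : i + j + d + 1 ≠ a + b)]
    exact this

theorem chain2 {a b c : ℕ} {g : ℕ → ℕ → ℕ} (hg : Valid (a + b) (top b c) g)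
    (i j d : ℕ) (h : i + j + d < a + b) :
    Function.update g (a + b) (top b c) (i + j + 1) i + d ≤
      Function.update g (a + b) (top b c) (i + j + d + 1) (i + d) := by
  induction d with
  | zero => rfl
  | succ d ih =>
    have h1 := ih (by omega)
    have := (hg.2 (i + j + d + 1) (i + d) (by omega) (by omega)).2
    rw [Function.update_of_ne (by omega : i + j + d + 1 ≠ a + b)] at h1
    have h2 : i + j + (d + 1) + 1 = i + j + d + 1 + 1 := by omega
    rw [h2, ← add_assoc i d 1]
    omega

theorem lower {a b c : ℕ} {g : ℕ → ℕ → ℕ} (hg : Valid (a + b) (top b c) g)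
    (k i : ℕ) (hik : i < k) (hk : k < a + b) : top b c i ≤ g k i := by
  have := chain1 hg i (k - i - 1) (a + b - k) (by omega)
  rw [show i + (k - i - 1) + (a + b - k) + 1 = a + b by omega,
    show i + (k - i - 1) + 1 = k by omega, Function.update_self,
    Function.update_of_ne (by omega)] at this
  exact this

theorem upper {a b c : ℕ} {g : ℕ → ℕ → ℕ} (hg : Valid (a + b) (top b c) g)
    (k i : ℕ) (hik : i < k) (hk : k < a + b) :
    g k i + (a + b - k) ≤ top b c (i + (a + b - k)) := by
  have := chain2 hg i (k - i - 1) (a + b - k) (by omega)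
  rw [show i + (k - i - 1) + (a + b - k) + 1 = a + b by omega,
    show i + (k - i - 1) + 1 = k by omega, Function.update_self,
    Function.update_of_ne (by omega)] at this
  exact this

theorem entry_le {a b c : ℕ} {g : ℕ → ℕ → ℕ} (hg : Valid (a + b) (top b c) g)
    (k i : ℕ) (hik : i < k) (hk : k < a + b) : g k i ≤ i + c := by
  have := upper hg k i hik hk
  unfold top at this
  split_ifs at this <;> omega

theorem mono1 {a b c : ℕ} {g : ℕ → ℕ → ℕ} (hg : Valid (a + b) (top b c) g)
    (k k' i : ℕ) (hik : i < k) (hkk : k ≤ k') (hk : k' < a + b) : g k' i ≤ g k i := by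
  have := chain1 hg i (k - i - 1) (k' - k) (by omega)
  rw [show i + (k - i - 1) + (k' - k) + 1 = k' by omega,
    show i + (k - i - 1) + 1 = k by omega,
    Function.update_of_ne (by omega), Function.update_of_ne (by omega)] at this
  exact this

theorem mono2 {a b c : ℕ} {g : ℕ → ℕ → ℕ} (hg : Valid (a + b) (top b c) g)
    (k i d : ℕ) (hik : i < k) (hk : k + d < a + b) : g k i + d ≤ g (k + d) (i + d) := by
  have := chain2 hg i (k - i - 1) d (by omega)
  rw [show i + (k - i - 1) + d + 1 = k + d by omega,
    show i + (k - i - 1) + 1 = k by omega,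
    Function.update_of_ne (by omega), Function.update_of_ne (by omega)] at this
  exact this

/-- The inverse map (truncated so as to be total). -/
def ofGfun (a b c : ℕ) (g : ℕ → ℕ → ℕ) : Fin a → Fin b → Fin (c + 1) := fun x y =>
  ⟨min c (g (x + b - y) (b - 1 - y) - (b - 1 - y)), by omega⟩

theorem ofG_valid {a b c : ℕ} {g : ℕ → ℕ → ℕ} (hg : Valid (a + b) (top b c) g) :
    ∀ i i' : Fin a, ∀ j j' : Fin b, i ≤ i' → j ≤ j' →
      ofGfun a b c g i' j' ≤ ofGfun a b c g i j := by
  intro x x' y y' hx hy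
  rw [Fin.le_def] at hx hy
  have hx' := x'.2
  have hy' := y'.2
  simp only [ofGfun, Fin.mk_le_mk]
  have h1 := mono1 hg (x + b - y') (x' + b - y') (b - 1 - y') (by omega) (by omega) (by omega)
  have h2 := mono2 hg (x + b - y') (b - 1 - y') (y' - y) (by omega) (by omega)
  rw [show (x : ℕ) + b - y' + (y' - y) = x + b - y by omega,
    show b - 1 - (y' : ℕ) + (y' - y) = b - 1 - y by omega] at h2
  omega

theorem wt_toG {a b c : ℕ} (π : PlanePartitionInBox a b c) :
    wt (a + b) (toG π) = (∑ k ∈ range (a + b), ∑ i ∈ range k, top b c i) + π.size := by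
  have h1 : π.size = ∑ z ∈ range a ×ˢ range b, pext π z.1 z.2 := by
    rw [Finset.sum_product, PlanePartitionInBox.size, ← Fin.sum_univ_eq_sum_range
      (fun x => ∑ y ∈ range b, pext π x y)]
    refine Finset.sum_congr rfl fun x _ => ?_
    rw [← Fin.sum_univ_eq_sum_range (fun y => pext π x y)]
    refine Finset.sum_congr rfl fun y _ => ?_
    simp [pext]
  have h2 : wt (a + b) (toG π) = ∑ k ∈ range (a + b), ∑ i ∈ range k,
      (top b c i + if i < b then pext π (k - i - 1) (b - 1 - i) else 0) := by
    unfold wt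
    refine Finset.sum_congr rfl fun k hk => Finset.sum_congr rfl fun i hi => ?_
    rw [Finset.mem_range] at hk hi
    rw [toG, if_pos ⟨hi, hk⟩, top]
    split_ifs <;> omega
  rw [h2]
  simp_rw [Finset.sum_add_distrib]
  congr 1
  rw [h1, Finset.sum_sigma']
  symm
  refine Finset.sum_of_injOn (fun z => ⟨z.1 + b - z.2, b - 1 - z.2⟩) ?_ ?_ ?_ ?_
  · rintro ⟨x, y⟩ hz ⟨x', y'⟩ hz' h
    simp only [Finset.coe_product, Finset.coe_range, Set.mem_prod, Set.mem_Iio] at hz hz'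
    simp only [Sigma.mk.injEq, heq_eq_eq] at h
    simp only [Prod.mk.injEq]
    omega
  · rintro ⟨x, y⟩ hz
    simp only [Finset.coe_product, Finset.coe_range, Set.mem_prod, Set.mem_Iio] at hz
    simp only [Finset.mem_coe, Finset.mem_sigma, Finset.mem_range]
    omega
  · rintro ⟨k, i⟩ hz hn
    simp only [Finset.mem_sigma, Finset.mem_range] at hz
    simp only
    split_ifs with hi
    · apply pext_zero
      by_contra hlt
      apply hn
      refine ⟨(k - i - 1, b - 1 - i), ?_, ?_⟩
      · simp only [Finset.coe_product, Finset.coe_range, Set.mem_prod, Set.mem_Iio]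
        omega
      · simp only [Sigma.mk.injEq, heq_eq_eq]
        omega
    · rfl
  · rintro ⟨x, y⟩ hz
    simp only [Finset.mem_product, Finset.mem_range] at hz
    simp only
    rw [if_pos (by omega)]
    congr 1 <;> omega

theorem sum_PP {R : Type*} [CommRing R] (q : R) (a b c : ℕ) :
    ∑ g ∈ S (a + b) (top b c), q ^ wt (a + b) g =
      q ^ (∑ k ∈ range (a + b), ∑ i ∈ range k, top b c i) *
        ∑ π : PlanePartitionInBox a b c, q ^ π.size := by
  rw [Finset.mul_sum]
  symm
  refine Finset.sum_bij' (fun π _ => toG π)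
    (fun g hg => ⟨ofGfun a b c g, ofG_valid ((mem_S _ _ _).1 hg)⟩) ?_ ?_ ?_ ?_ ?_
  · intro π _
    exact (mem_S _ _ _).2 (toG_valid π)
  · intros; exact Finset.mem_univ _
  · intro π _
    apply Subtype.ext
    funext x y
    apply Fin.ext
    have hx := x.2
    have hy := y.2
    have hc : (π.1 x y : ℕ) ≤ c := Nat.lt_succ_iff.1 (Fin.is_lt _)
    simp only [ofGfun, toG]
    rw [if_pos (by omega), if_pos (by omega),
      show (x : ℕ) + b - y - (b - 1 - y) - 1 = x by omega,
      show b - 1 - (b - 1 - (y : ℕ)) = y by omega, pext, dif_pos ⟨hx, hy⟩]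
    simp only [Fin.eta]
    omega
  · intro g hg
    rw [mem_S] at hg
    funext k i
    simp only [toG]
    split_ifs with h1 h2
    · have l1 := lower hg k i h1.1 h1.2
      have l2 := upper hg k i h1.1 h1.2
      have l3 := entry_le hg k i h1.1 h1.2
      unfold pext
      unfold top at l1 l2
      rw [if_pos h2] at l1
      split_ifs with h3
      · simp only [ofGfun]
        rw [show k - i - 1 + b - (b - 1 - i) = k by omega,
          show b - 1 - (b - 1 - i) = i by omega]
        omega
      · rw [if_pos (by omega)] at l2
        omega
    · have l1 := lower hg k i h1.1 h1.2
      have l3 := entry_le hg k i h1.1 h1.2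
      unfold top at l1
      rw [if_neg h2] at l1
      omega
    · exact (hg.1 k i (by omega)).symm
  · intro π _
    rw [← pow_add, wt_toG]

/-! ### The variance functional -/

/-- Variance functional of a polynomial. -/
noncomputable def V (F : ℚ[X]) : ℚ :=
  ((derivative (derivative F)).eval 1 + (derivative F).eval 1) / F.eval 1 -
    ((derivative F).eval 1 / F.eval 1) ^ 2

theorem V_mul {F G : ℚ[X]} (hF : F.eval 1 ≠ 0) (hG : G.eval 1 ≠ 0) : V (F * G) = V F + V G := by
  simp only [V, derivative_mul, derivative_add, eval_add, eval_mul]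
  field_simp
  ring

theorem V_prod {ι : Type*} (s : Finset ι) (F : ι → ℚ[X]) (h : ∀ i ∈ s, (F i).eval 1 ≠ 0) :
    V (∏ i ∈ s, F i) = ∑ i ∈ s, V (F i) := by
  classical
  induction s using Finset.induction_on with
  | empty => simp [V]
  | insert i s hi ih =>
    rw [Finset.prod_insert hi, Finset.sum_insert hi, V_mul, ih]
    · intro j hj; exact h j (Finset.mem_insert_of_mem hj)
    · exact h i (Finset.mem_insert_self _ _)
    · rw [eval_prod, Finset.prod_ne_zero_iff]
      intro j hj; exact h j (Finset.mem_insert_of_mem hj)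

theorem V_sum {ι : Type*} (s : Finset ι) (w : ι → ℕ) :
    V (∑ i ∈ s, X ^ w i) = (∑ i ∈ s, (w i : ℚ) ^ 2) / (s.card : ℚ) -
      ((∑ i ∈ s, (w i : ℚ)) / (s.card : ℚ)) ^ 2 := by
  have h : (∑ i ∈ s, (w i : ℚ) ^ 2) = ∑ i ∈ s, ((w i : ℚ) * ((w i - 1 : ℕ) : ℚ) + w i) := by
    refine Finset.sum_congr rfl fun i _ => ?_
    rcases w i with _ | k
    · simp
    · simp; ring
  rw [h, Finset.sum_add_distrib]
  simp [V, eval_finsetSum, derivative_X_pow]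

theorem V_X_pow (e : ℕ) : V (X ^ e) = 0 := by
  have := V_sum (Finset.range 1) (fun _ => e)
  simpa using this

theorem V_qint (n : ℕ) (hn : 0 < n) : V (∑ i ∈ range n, X ^ i) = ((n : ℚ) ^ 2 - 1) / 12 := by
  have := V_sum (Finset.range n) (fun i => i)
  rw [this]
  have h1 : ∑ i ∈ range n, (i : ℚ) = n * (n - 1) / 2 := by
    clear this hn
    induction n with
    | zero => simp
    | succ n ih => rw [Finset.sum_range_succ, ih]; push_cast; ring
  have h2 : ∑ i ∈ range n, (i : ℚ) ^ 2 = n * (n - 1) * (2 * n - 1) / 6 := by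
    clear this hn h1
    induction n with
    | zero => simp
    | succ n ih => rw [Finset.sum_range_succ, ih]; push_cast; ring
  have : (n : ℚ) ≠ 0 := by positivity
  rw [h1, h2, Finset.card_range]
  field_simp
  ring

/-- q-integers. -/
noncomputable def qi (n : ℕ) : ℚ[X] := ∑ i ∈ range n, X ^ i

theorem qi_eval (n : ℕ) : (qi n).eval 1 = n := by simp [qi, eval_finsetSum]

theorem qi_mul (n : ℕ) : (X ^ n - 1 : ℚ[X]) = (X - 1) * qi n := by
  rw [qi, mul_geom_sum]

theorem top_lt {b c i k : ℕ} (h : i < k) : top b c i < top b c k := by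
  unfold top
  split_ifs <;> omega

theorem poly_id (a b c : ℕ) :
    (∏ k ∈ range (a + b), ∏ j ∈ range k, qi (j + 1)) *
      (X ^ (∑ k ∈ range (a + b), ∑ i ∈ range k, top b c i) *
        ∑ π : PlanePartitionInBox a b c, (X : ℚ[X]) ^ π.size) =
    ∏ k ∈ range (a + b), ∏ i ∈ range k, (X ^ top b c i * qi (top b c k - top b c i)) := by
  have h := main_det (X : ℚ[X]) (a + b) (top b c) (fun i _ => (top_lt (by omega)).le)
  rw [vand_prod (a + b) (fun i => (X : ℚ[X]) ^ top b c i), sum_PP] at h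
  have h1 : C (X : ℚ[X]) (a + b) = (∏ k ∈ range (a + b), ∏ j ∈ range k, (X - 1 : ℚ[X])) *
      ∏ k ∈ range (a + b), ∏ j ∈ range k, qi (j + 1) := by
    simp only [C, qi_mul, Finset.prod_mul_distrib]
  have h2 : ∏ k ∈ range (a + b), ∏ i ∈ range k, ((X : ℚ[X]) ^ top b c k - X ^ top b c i) =
      (∏ k ∈ range (a + b), ∏ j ∈ range k, (X - 1 : ℚ[X])) *
      ∏ k ∈ range (a + b), ∏ i ∈ range k, (X ^ top b c i * qi (top b c k - top b c i)) := by
    simp only [← Finset.prod_mul_distrib]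
    refine Finset.prod_congr rfl fun k hk => Finset.prod_congr rfl fun i hi => ?_
    have hlt : top b c i < top b c k := top_lt (Finset.mem_range.1 hi)
    rw [mul_left_comm, ← qi_mul, mul_sub, ← pow_add, mul_one, Nat.add_sub_cancel' hlt.le]
  rw [h1, h2, mul_assoc] at h
  refine mul_left_cancel₀ ?_ h
  rw [Finset.prod_ne_zero_iff]
  intro k _
  rw [Finset.prod_ne_zero_iff]
  intro i _
  simpa using X_sub_C_ne_zero (1 : ℚ)

theorem arith (a b c : ℕ) :
    ∑ k ∈ range (a + b), ((∑ i ∈ range k, (((top b c k : ℚ) - top b c i) ^ 2 - 1) / 12) -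
      ∑ j ∈ range k, (((j : ℚ) + 1) ^ 2 - 1) / 12) = (a : ℚ) * b * c * (a + b + c) / 12 := by
  have hr : ∀ k, ∑ j ∈ range k, (((j : ℚ) + 1) ^ 2 - 1) / 12 =
      ∑ i ∈ range k, (((k : ℚ) - i) ^ 2 - 1) / 12 := by
    intro k
    rw [← Finset.sum_range_reflect]
    refine Finset.sum_congr rfl fun i hi => ?_
    rw [Finset.mem_range] at hi
    rw [show ((k - 1 - i : ℕ) : ℚ) = k - 1 - i by
      rw [Nat.cast_sub (by omega), Nat.cast_sub (by omega)]; simp]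
    ring
  simp_rw [hr, ← Finset.sum_sub_distrib]
  induction a with
  | zero =>
    rw [Finset.sum_eq_zero]
    · simp
    · intro k hk
      refine Finset.sum_eq_zero fun i hi => ?_
      rw [Finset.mem_range] at hk hi
      rw [top, top, if_pos (by omega), if_pos (by omega)]
      simp
  | succ a ih =>
    rw [show a + 1 + b = (a + b) + 1 by omega, Finset.sum_range_succ, ih, add_comm a b,
      Finset.sum_range_add]
    have z : ∑ x ∈ range a, ((((top b c (b + a) : ℚ) - top b c (b + x)) ^ 2 - 1) / 12 -
        ((((b + a : ℕ) : ℚ) - ((b + x : ℕ) : ℚ)) ^ 2 - 1) / 12) = 0 := by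
      refine Finset.sum_eq_zero fun i _ => ?_
      rw [top, top, if_neg (by omega), if_neg (by omega)]
      push_cast
      ring
    have y : ∑ x ∈ range b, ((((top b c (b + a) : ℚ) - top b c x) ^ 2 - 1) / 12 -
        ((((b + a : ℕ) : ℚ) - (x : ℚ)) ^ 2 - 1) / 12) =
        ∑ x ∈ range b, ((c : ℚ) ^ 2 + 2 * c * (b + a) - 2 * c * x) / 12 := by
      refine Finset.sum_congr rfl fun i hi => ?_
      rw [Finset.mem_range] at hi
      rw [top, top, if_neg (by omega), if_pos (by omega)]
      push_cast
      ring
    have s : ∀ n : ℕ, ∑ x ∈ range n, ((c : ℚ) ^ 2 + 2 * c * (b + a) - 2 * c * x) / 12 =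
        ((n : ℚ) * ((c : ℚ) ^ 2 + 2 * c * (b + a)) - c * n * (n - 1)) / 12 := by
      intro n
      induction n with
      | zero => simp
      | succ n ih => rw [Finset.sum_range_succ, ih]; push_cast; ring
    rw [z, y, s]
    push_cast
    ring

theorem V_gen (a b c : ℕ) : V (∑ π : PlanePartitionInBox a b c, X ^ π.size) =
    (a : ℚ) * b * c * (a + b + c) / 12 := by
  have h := congrArg V (poly_id a b c)
  have q0 : ∀ n, 0 < n → (qi n).eval 1 ≠ 0 := by
    intro n hn; rw [qi_eval]; positivity
  have ne1 : ∀ k, (∏ j ∈ range k, qi (j + 1)).eval 1 ≠ 0 := by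
    intro k
    rw [eval_prod, Finset.prod_ne_zero_iff]
    intro j _; exact q0 _ (by omega)
  have t0 : ∀ k, ∀ i ∈ range k,
      (X ^ top b c i * qi (top b c k - top b c i)).eval 1 ≠ 0 := by
    intro k i hi
    have := top_lt (b := b) (c := c) (Finset.mem_range.1 hi)
    rw [eval_mul]
    simpa using q0 (top b c k - top b c i) (by omega)
  have t1 : ∀ k, (∏ i ∈ range k,
      (X ^ top b c i * qi (top b c k - top b c i))).eval 1 ≠ 0 := by
    intro k
    rw [eval_prod, Finset.prod_ne_zero_iff]
    exact t0 k
  have p0 : (∑ π : PlanePartitionInBox a b c, (X : ℚ[X]) ^ π.size).eval 1 ≠ 0 := by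
    have : Nonempty (PlanePartitionInBox a b c) := ⟨⟨fun _ _ => 0, by simp⟩⟩
    simp [eval_finsetSum]
  have l1 : V (∏ k ∈ range (a + b), ∏ j ∈ range k, qi (j + 1)) =
      ∑ k ∈ range (a + b), ∑ j ∈ range k, (((j : ℚ) + 1) ^ 2 - 1) / 12 := by
    rw [V_prod _ _ (fun k _ => ne1 k)]
    refine Finset.sum_congr rfl fun k _ => ?_
    rw [V_prod _ _ (fun j _ => q0 _ (by omega))]
    refine Finset.sum_congr rfl fun j _ => ?_
    rw [qi, V_qint _ (by omega)]
    push_cast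
    ring
  have l2 : V (∏ k ∈ range (a + b), ∏ i ∈ range k,
      (X ^ top b c i * qi (top b c k - top b c i))) =
      ∑ k ∈ range (a + b), ∑ i ∈ range k, (((top b c k : ℚ) - top b c i) ^ 2 - 1) / 12 := by
    rw [V_prod _ _ (fun k _ => t1 k)]
    refine Finset.sum_congr rfl fun k _ => ?_
    rw [V_prod _ _ (t0 k)]
    refine Finset.sum_congr rfl fun i hi => ?_
    have := top_lt (b := b) (c := c) (Finset.mem_range.1 hi)
    rw [V_mul (by simp) (q0 _ (by omega)), V_X_pow, qi, V_qint _ (by omega),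
      Nat.cast_sub this.le, zero_add]
  rw [l2, V_mul, V_mul, V_X_pow, l1] at h
  · rw [← arith a b c, Finset.sum_sub_distrib]
    linarith
  · simp
  · exact p0
  · rw [eval_prod, Finset.prod_ne_zero_iff]
    exact fun k _ => ne1 k
  · rw [eval_mul]
    simpa using p0

end MacBox

theorem stmt_10 (a b c : ℕ) (ha : 0 < a) (hb : 0 < b) (hc : 0 < c) :
    (∑ π : PlanePartitionInBox a b c, (π.size : ℚ) ^ 2)
        / (Fintype.card (PlanePartitionInBox a b c) : ℚ)
      - ((∑ π : PlanePartitionInBox a b c, (π.size : ℚ))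
          / (Fintype.card (PlanePartitionInBox a b c) : ℚ)) ^ 2
      = (a : ℚ) * b * c * ((a : ℚ) + b + c) / 12 := by
  rw [← MacBox.V_gen, MacBox.V_sum, Finset.card_univ]
end
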